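/- arXiv:0705.0403 — 6 statements merged into one kernel-verified Lean document; each statement's English description precedes it below -/
import Mathlib

section
/- Let M ∈ ℝ^{n×n} be symmetric positive definite with smallest eigenvalue λ_min(M) ≥ λ̄ > 0, let 0 < γ < 1, and let k > 1/(4γ(1−γ²)λ̄). Then the matrix Q = [[2k(1−γ²)M, −Iₙ],[−Iₙ, 2γIₙ]] ∈ ℝ^{2n×2n} is positive definite. -/
open Matrix

/-- Lower bound of the quadratic form by a lower bound of the eigenvalues. -/
theorem Q_eig_bound {n : ℕ} (M : Matrix (Fin n) (Fin n) ℝ) (hM : M.IsHermitian)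
    (lam : ℝ) (heig : ∀ i, lam ≤ hM.eigenvalues i) (u : Fin n → ℝ) :
    lam * (u ⬝ᵥ u) ≤ u ⬝ᵥ (M *ᵥ u) := by
  have hH : (M - lam • (1 : Matrix (Fin n) (Fin n) ℝ)).IsHermitian := by
    simp [Matrix.IsHermitian, (by simpa using hM.eq : Mᵀ = M)]
  have hps : (M - lam • (1 : Matrix (Fin n) (Fin n) ℝ)).PosSemidef := by
    rw [hH.posSemidef_iff_eigenvalues_nonneg]
    intro i
    have h1 : hH.eigenvalues i ∈ spectrum ℝ (M - lam • (1 : Matrix (Fin n) (Fin n) ℝ)) :=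
      hH.eigenvalues_mem_spectrum_real i
    have h2 : hH.eigenvalues i + lam ∈ spectrum ℝ M := by
      have := (spectrum.add_mem_add_iff (r := hH.eigenvalues i) (s := lam)).mpr h1
      simpa [Algebra.algebraMap_eq_smul_one] using this
    rw [hM.spectrum_real_eq_range_eigenvalues] at h2
    obtain ⟨j, hj⟩ := h2
    have := heig j
    simp only [Pi.zero_apply]
    linarith
  have := hps.dotProduct_mulVec_nonneg u
  simp [Matrix.sub_mulVec, Matrix.smul_mulVec, dotProduct_sub] at this
  linarith

/-- If `M ∈ ℝ^{n×n}` is symmetric positive definite with all eigenvalues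
`≥ λ̄ > 0`, `0 < γ < 1`, and `k > 1/(4γ(1-γ²)λ̄)`, then
`Q = [[2k(1-γ²)M, -I],[-I, 2γI]]` is positive definite. -/
theorem Q_posDef {n : ℕ}
    (M : Matrix (Fin n) (Fin n) ℝ) (hM : M.PosDef)
    (lam γ k : ℝ) (hlam : 0 < lam)
    (heig : ∀ i, lam ≤ hM.1.eigenvalues i)
    (hγ0 : 0 < γ) (hγ1 : γ < 1)
    (hk : 1 / (4 * γ * (1 - γ ^ 2) * lam) < k) :
    (Matrix.fromBlocks ((2 * k * (1 - γ ^ 2)) • M)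
      (-(1 : Matrix (Fin n) (Fin n) ℝ)) (-(1 : Matrix (Fin n) (Fin n) ℝ))
      ((2 * γ) • (1 : Matrix (Fin n) (Fin n) ℝ))).PosDef := by
  classical
  have hc : 0 < 1 - γ ^ 2 := by nlinarith
  have hpos : 0 < 4 * γ * (1 - γ ^ 2) * lam := by positivity
  have hk0 : 0 < k := lt_trans (by positivity) hk
  rw [div_lt_iff₀ hpos] at hk
  have hMsym : M.IsHermitian := hM.1
  refine Matrix.PosDef.of_dotProduct_mulVec_pos ?_ ?_
  · refine Matrix.IsHermitian.fromBlocks ?_ (by simp) ?_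
    · simp [Matrix.IsHermitian, (by simpa using hMsym.eq : Mᵀ = M)]
    · simp [Matrix.IsHermitian]
  · intro x hx
    obtain ⟨u, v, rfl⟩ : ∃ u v : Fin n → ℝ, x = Sum.elim u v :=
      ⟨x ∘ Sum.inl, x ∘ Sum.inr, (Sum.elim_comp_inl_inr x).symm⟩
    have hb := Q_eig_bound M hM.1 lam heig u
    have hexp : star (Sum.elim u v) ⬝ᵥ ((Matrix.fromBlocks ((2 * k * (1 - γ ^ 2)) • M)
      (-(1 : Matrix (Fin n) (Fin n) ℝ)) (-(1 : Matrix (Fin n) (Fin n) ℝ))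
      ((2 * γ) • (1 : Matrix (Fin n) (Fin n) ℝ))) *ᵥ (Sum.elim u v))
      = 2 * k * (1 - γ ^ 2) * (u ⬝ᵥ (M *ᵥ u)) - 2 * (u ⬝ᵥ v) + 2 * γ * (v ⬝ᵥ v) := by
      rw [Matrix.fromBlocks_mulVec, star_trivial, sumElim_dotProduct_sumElim]
      simp [Matrix.smul_mulVec, Matrix.neg_mulVec, dotProduct_add, dotProduct_comm v u]
      ring
    rw [hexp]
    have hw : (u - (2 * γ) • v) ⬝ᵥ (u - (2 * γ) • v)
        = u ⬝ᵥ u - 4 * γ * (u ⬝ᵥ v) + 4 * γ ^ 2 * (v ⬝ᵥ v) := by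
      simp [sub_dotProduct, dotProduct_sub, dotProduct_comm v u]
      ring
    have hnn : ∀ w : Fin n → ℝ, 0 ≤ w ⬝ᵥ w := fun w =>
      Finset.sum_nonneg fun i _ => mul_self_nonneg (w i)
    have hw0 := hnn (u - (2 * γ) • v)
    rw [hw] at hw0
    have hkc : 0 ≤ 2 * k * (1 - γ ^ 2) := by positivity
    have h1 := mul_le_mul_of_nonneg_left hb hkc
    by_cases hu : u = 0
    · subst hu
      have hv : v ≠ 0 := by
        rintro rfl
        apply hx
        ext i
        cases i <;> rfl
      have hvv : 0 < v ⬝ᵥ v :=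
        lt_of_le_of_ne (hnn v) (fun h => hv (dotProduct_self_eq_zero.mp h.symm))
      simp
      positivity
    · have huu : 0 < u ⬝ᵥ u :=
        lt_of_le_of_ne (hnn u) (fun h => hu (dotProduct_self_eq_zero.mp h.symm))
      have h2 := mul_lt_mul_of_pos_right hk huu
      have h3 := mul_le_mul_of_nonneg_left h1 (by positivity : 0 ≤ 2 * γ)
      refine pos_of_mul_pos_right (a := 2 * γ) ?_ (by positivity)
      nlinarith
end

section
/- Let M ∈ ℝ^{n×n} be symmetric with eigenvalues λ₁,…,λₙ (with multiplicity), let k > 0 and 0 < γ < 1, and let Q = [[2k(1−γ²)M, −Iₙ],[−Iₙ, 2γIₙ]] ∈ ℝ^{2n×2n}. Then the eigenvalues of Q are exactly the 2n real numbers μ_{i,±} = (1−γ²)kλᵢ + γ ± √(((1−γ²)kλᵢ + γ)² − 4γ(1−γ²)kλᵢ + 1) for i = 1,…,n; equivalently, writing aᵢ = (1−γ²)kλᵢ, μ_{i,±} = aᵢ + γ ± √((aᵢ − γ)² + 1). -/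
open Matrix

/-- For symmetric `M ∈ ℝ^{n×n}` with eigenvalues `λ₁,…,λₙ` (with multiplicity),
`k > 0`, `0 < γ < 1`, the eigenvalues (with multiplicity) of
`Q = [[2k(1-γ²)M, -I],[-I, 2γI]] ∈ ℝ^{2n×2n}` are exactly the `2n` numbers
`(1-γ²)kλᵢ + γ ± √(((1-γ²)kλᵢ - γ)² + 1)`, `i = 1,…,n`
(equivalently `± √(((1-γ²)kλᵢ + γ)² - 4γ(1-γ²)kλᵢ + 1)`), stated as a multiset equality. -/
theorem Q_eigenvalues {n : ℕ}
    (M : Matrix (Fin n) (Fin n) ℝ) (hM : M.IsHermitian)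
    (k γ : ℝ) (hk : 0 < k) (hγ0 : 0 < γ) (hγ1 : γ < 1)
    (Q : Matrix (Fin n ⊕ Fin n) (Fin n ⊕ Fin n) ℝ)
    (hQ : Q = Matrix.fromBlocks ((2 * k * (1 - γ ^ 2)) • M)
      (-(1 : Matrix (Fin n) (Fin n) ℝ)) (-(1 : Matrix (Fin n) (Fin n) ℝ))
      ((2 * γ) • (1 : Matrix (Fin n) (Fin n) ℝ)))
    (hQh : Q.IsHermitian) :
    (Finset.univ : Finset (Fin n ⊕ Fin n)).val.map hQh.eigenvalues =
      (Finset.univ : Finset (Fin n)).val.map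
        (fun i => (1 - γ ^ 2) * k * hM.eigenvalues i + γ +
          Real.sqrt (((1 - γ ^ 2) * k * hM.eigenvalues i - γ) ^ 2 + 1)) +
      (Finset.univ : Finset (Fin n)).val.map
        (fun i => (1 - γ ^ 2) * k * hM.eigenvalues i + γ -
          Real.sqrt (((1 - γ ^ 2) * k * hM.eigenvalues i - γ) ^ 2 + 1)) := by
  have hc : 0 < 2 * k * (1 - γ ^ 2) := by
    have : 0 < 1 - γ ^ 2 := by nlinarith
    positivity
  have key : Q.charpoly =
      (∏ i, (Polynomial.X - Polynomial.C ((1 - γ ^ 2) * k * hM.eigenvalues i + γ +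
          Real.sqrt (((1 - γ ^ 2) * k * hM.eigenvalues i - γ) ^ 2 + 1)))) *
      (∏ i, (Polynomial.X - Polynomial.C ((1 - γ ^ 2) * k * hM.eigenvalues i + γ -
          Real.sqrt (((1 - γ ^ 2) * k * hM.eigenvalues i - γ) ^ 2 + 1)))) := by
    apply Polynomial.eq_of_infinite_eval_eq
    refine Set.Infinite.mono (s := ({2 * γ} : Set ℝ)ᶜ) ?_ (Set.finite_singleton _).infinite_compl
    intro x hx
    have hx0 : x - 2 * γ ≠ 0 := sub_ne_zero.mpr hx
    have ht : (2 * k * (1 - γ ^ 2)) * (x - 2 * γ) ≠ 0 := mul_ne_zero hc.ne' hx0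
    have hM' : ∀ y : ℝ, (Matrix.scalar (Fin n) y - M).det = ∏ i, (y - hM.eigenvalues i) := by
      intro y
      rw [← Matrix.eval_charpoly, hM.charpoly_eq, Polynomial.eval_prod]
      simp
    have hblock : Matrix.scalar (Fin n ⊕ Fin n) x - Q =
        Matrix.fromBlocks (Matrix.scalar (Fin n) x - (2 * k * (1 - γ ^ 2)) • M) 1 1
          ((x - 2 * γ) • (1 : Matrix (Fin n) (Fin n) ℝ)) := by
      subst hQ
      ext i j
      rcases i with i | i <;> rcases j with j | j <;>
        simp [Matrix.diagonal_apply, Matrix.one_apply] <;> split_ifs <;> simp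
    let _ : Invertible ((x - 2 * γ) • (1 : Matrix (Fin n) (Fin n) ℝ)) :=
      ⟨(x - 2 * γ)⁻¹ • 1, by simp [smul_smul, hx0], by simp [smul_smul, hx0]⟩
    have hinv : ⅟((x - 2 * γ) • (1 : Matrix (Fin n) (Fin n) ℝ)) = (x - 2 * γ)⁻¹ • 1 := rfl
    have hschur : Matrix.scalar (Fin n) x - (2 * k * (1 - γ ^ 2)) • M -
        1 * ((x - 2 * γ)⁻¹ • (1 : Matrix (Fin n) (Fin n) ℝ)) * 1 =
        (2 * k * (1 - γ ^ 2)) • (Matrix.scalar (Fin n)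
          ((x - (x - 2 * γ)⁻¹) / (2 * k * (1 - γ ^ 2))) - M) := by
      ext i j
      by_cases h : i = j
      · subst h
        simp only [Matrix.sub_apply, Matrix.smul_apply, Matrix.scalar_apply, Matrix.one_mul,
          Matrix.mul_one, Matrix.diagonal_apply_eq, Matrix.one_apply_eq, smul_eq_mul]
        have h1 : (2 * k * (1 - γ ^ 2)) * ((x - (x - 2 * γ)⁻¹) / (2 * k * (1 - γ ^ 2))) =
          x - (x - 2 * γ)⁻¹ := mul_div_cancel₀ _ hc.ne'
        linear_combination -h1
      · simp [h]
    change Polynomial.eval x Q.charpoly = Polynomial.eval x _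
    rw [Matrix.eval_charpoly, hblock, Matrix.det_fromBlocks₂₂, hinv, hschur, Matrix.det_smul,
      Matrix.det_smul, hM', Matrix.det_one, mul_one, Polynomial.eval_mul, Polynomial.eval_prod,
      Polynomial.eval_prod, ← Finset.prod_mul_distrib, ← mul_assoc, ← mul_pow,
      ← Finset.card_univ, ← Finset.prod_const, ← Finset.prod_mul_distrib]
    refine Finset.prod_congr rfl fun i _ => ?_
    have hs := Real.sq_sqrt (show 0 ≤ ((1 - γ ^ 2) * k * hM.eigenvalues i - γ) ^ 2 + 1 by positivity)
    simp only [Polynomial.eval_sub, Polynomial.eval_X, Polynomial.eval_C]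
    generalize Real.sqrt (((1 - γ ^ 2) * k * hM.eigenvalues i - γ) ^ 2 + 1) = r at hs ⊢
    generalize hM.eigenvalues i = l at hs ⊢
    have e1 : (x - 2 * γ) * (2 * k * (1 - γ ^ 2)) *
        ((x - (x - 2 * γ)⁻¹) / (2 * k * (1 - γ ^ 2)) - l) =
        (x - 2 * γ) * x - 1 - (x - 2 * γ) * (2 * k * (1 - γ ^ 2)) * l := by
      have h1 : (2 * k * (1 - γ ^ 2)) * ((x - (x - 2 * γ)⁻¹) / (2 * k * (1 - γ ^ 2))) =
        x - (x - 2 * γ)⁻¹ := mul_div_cancel₀ _ hc.ne'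
      have h2 : (x - 2 * γ) * (x - 2 * γ)⁻¹ = 1 := mul_inv_cancel₀ hx0
      linear_combination (x - 2 * γ) * h1 - h2
    rw [e1]
    linear_combination hs
  have h1 := hQh.roots_charpoly_eq_eigenvalues
  rw [key, Polynomial.roots_mul] at h1
  · have hr : ∀ f : Fin n → ℝ, (∏ i, (Polynomial.X - Polynomial.C (f i))).roots =
        (Finset.univ : Finset (Fin n)).val.map f := by
      intro f
      have := Polynomial.roots_multiset_prod_X_sub_C ((Finset.univ : Finset (Fin n)).val.map f)
      rwa [Multiset.map_map] at this
    rw [hr, hr] at h1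
    exact h1.symm
  · rw [← key]
    exact (Matrix.charpoly_monic Q).ne_zero
end

section
/- Let M ∈ ℝ^{n×n} be symmetric positive definite with all eigenvalues ≥ λ̄ > 0, let 0 < γ < 1 and k > 1/(4γ(1−γ²)λ̄), and set μ̄ = (1−γ²)kλ̄ + γ − √(((1−γ²)kλ̄ − γ)² + 1). Then for every z ∈ ℝ^{2n}, zᵀQz ≥ μ̄‖z‖², where Q = [[2k(1−γ²)M, −Iₙ],[−Iₙ, 2γIₙ]] and ‖·‖ is the Euclidean norm; i.e., Q − μ̄I is positive semidefinite. -/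
open Matrix

open scoped MatrixOrder in
theorem quad_lower_aux {n : ℕ} (M : Matrix (Fin n) (Fin n) ℝ) (hM : M.PosDef) (lam : ℝ)
    (heig : ∀ i, lam ≤ hM.1.eigenvalues i) (x : Fin n → ℝ) :
    lam * (x ⬝ᵥ x) ≤ x ⬝ᵥ M *ᵥ x := by
  have h : (M - lam • (1 : Matrix (Fin n) (Fin n) ℝ)).PosSemidef := by
    rw [posSemidef_iff_isHermitian_and_spectrum_nonneg]
    refine ⟨hM.1.sub (by simp [IsHermitian]), ?_⟩
    intro t ht
    rw [← Algebra.algebraMap_eq_smul_one, ← spectrum.sub_singleton_eq,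
      hM.1.spectrum_real_eq_range_eigenvalues] at ht
    obtain ⟨_, ⟨i, rfl⟩, _, rfl, rfl⟩ := ht
    exact sub_nonneg.2 (heig i)
  have h2 := h.dotProduct_mulVec_nonneg x
  simp only [star_trivial, sub_mulVec, smul_mulVec, one_mulVec, dotProduct_sub, dotProduct_smul,
    smul_eq_mul] at h2
  linarith

/-- If `M ∈ ℝ^{n×n}` is symmetric positive definite with all eigenvalues
`≥ λ̄ > 0`, `0 < γ < 1`, `k > 1/(4γ(1-γ²)λ̄)`, and
`μ̄ = (1-γ²)kλ̄ + γ - √(((1-γ²)kλ̄ - γ)² + 1)`, then for every `z ∈ ℝ^{2n}`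
`zᵀQz ≥ μ̄‖z‖²`, where `Q = [[2k(1-γ²)M, -I],[-I, 2γI]]` and `z ⬝ᵥ z = ‖z‖²` is the
squared Euclidean norm. -/
theorem Q_quadratic_form_lower_bound {n : ℕ}
    (M : Matrix (Fin n) (Fin n) ℝ) (hM : M.PosDef)
    (lam γ k : ℝ) (hlam : 0 < lam)
    (heig : ∀ i, lam ≤ hM.1.eigenvalues i)
    (hγ0 : 0 < γ) (hγ1 : γ < 1)
    (hk : 1 / (4 * γ * (1 - γ ^ 2) * lam) < k) :
    ∀ z : Fin n ⊕ Fin n → ℝ,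
      ((1 - γ ^ 2) * k * lam + γ -
          Real.sqrt (((1 - γ ^ 2) * k * lam - γ) ^ 2 + 1)) * (z ⬝ᵥ z) ≤
        z ⬝ᵥ (Matrix.fromBlocks ((2 * k * (1 - γ ^ 2)) • M)
          (-(1 : Matrix (Fin n) (Fin n) ℝ)) (-(1 : Matrix (Fin n) (Fin n) ℝ))
          ((2 * γ) • (1 : Matrix (Fin n) (Fin n) ℝ))).mulVec z := by
  intro z
  obtain ⟨x, y, rfl⟩ : ∃ x y, z = Sum.elim x y := ⟨z ∘ Sum.inl, z ∘ Sum.inr, by simp⟩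
  have hx := quad_lower_aux M hM lam heig x
  have hg : 0 < 1 - γ ^ 2 := by nlinarith
  have hk0 : 0 < k := lt_trans (by positivity) hk
  rw [fromBlocks_mulVec]
  simp only [Sum.elim_comp_inl, Sum.elim_comp_inr, sumElim_dotProduct_sumElim, dotProduct_add,
    smul_mulVec, neg_mulVec, one_mulVec, dotProduct_neg, dotProduct_smul, smul_eq_mul]
  rw [dotProduct_comm y x]
  have h1 : (1 - γ ^ 2) * k * lam * (x ⬝ᵥ x) ≤ (1 - γ ^ 2) * k * (x ⬝ᵥ M *ᵥ x) := by
    rw [mul_assoc]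
    exact mul_le_mul_of_nonneg_left hx (by positivity)
  generalize (1 - γ ^ 2) * k * lam = a at *
  have hs := Real.sq_sqrt (show 0 ≤ (a - γ) ^ 2 + 1 by positivity)
  have hs0 := Real.sqrt_nonneg ((a - γ) ^ 2 + 1)
  generalize √((a - γ) ^ 2 + 1) = s at *
  have hp : 0 < s + (a - γ) := by
    have := abs_lt_of_sq_lt_sq (show (a - γ) ^ 2 < s ^ 2 by linarith) hs0
    linarith [(abs_lt.1 this).1]
  have hq : 0 ≤ ((s + (a - γ)) • x - y) ⬝ᵥ ((s + (a - γ)) • x - y) := by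
    simpa using dotProduct_star_self_nonneg ((s + (a - γ)) • x - y)
  simp only [sub_dotProduct, dotProduct_sub, smul_dotProduct, dotProduct_smul, smul_eq_mul] at hq
  rw [dotProduct_comm y x] at hq
  have key : 0 ≤ (s + (a - γ)) * (x ⬝ᵥ x) - 2 * (x ⬝ᵥ y) + (s - (a - γ)) * (y ⬝ᵥ y) := by
    refine nonneg_of_mul_nonneg_right (a := s + (a - γ)) ?_ hp
    linear_combination hq - (y ⬝ᵥ y) * hs
  linarith
end

section
/- Under the hypotheses of Theorem 1 (finite 𝒫, symmetric positive definite M_p with eigenvalues ≥ λ̄ > 0, 0 < γ < 1, k > 1/(4γ(1−γ²)λ̄), arbitrary switching signal σ, differentiable ε with ε̇(t) = (F_{σ(t)} ⊗ I₂)ε(t) + g(t)), suppose additionally that δ(t) ≡ 0 (i.e., δ̄ = 0, the leader's input a(t) = a₀(t) is known). Then ε(t) → 0 as t → ∞; in fact ‖ε(t)‖² ≤ (V(ε(0))/(1−γ)) e^{−βt} for all t ≥ 0, where V(z) = zᵀ(P ⊗ I₂)z, P = [[Iₙ, −γIₙ],[−γIₙ, Iₙ]], and β = μ̄/(2(1+γ))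 with μ̄ = (1−γ²)kλ̄ + γ − √(((1−γ²)kλ̄ − γ)² + 1). -/
open Matrix Kronecker


lemma aux_kron {m : Type*} [Fintype m] [DecidableEq m] (A : Matrix m m ℝ) (z : m × Fin 2 → ℝ)
    (i : m) (c : Fin 2) :
    ((A ⊗ₖ (1 : Matrix (Fin 2) (Fin 2) ℝ)).mulVec z) (i, c) = (A.mulVec (fun j => z (j, c))) i := by
  simp [Matrix.mulVec, dotProduct, Fintype.sum_prod_type, Matrix.one_apply]

lemma aux_eig {n : ℕ} (M : Matrix (Fin n) (Fin n) ℝ) (h : M.IsHermitian) (lam : ℝ)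
    (he : ∀ i, lam ≤ h.eigenvalues i) (x : Fin n → ℝ) :
    lam * (x ⬝ᵥ x) ≤ x ⬝ᵥ M.mulVec x := by
  have h1 : (M - lam • (1 : Matrix (Fin n) (Fin n) ℝ)).PosSemidef := by
    have hs := h.spectral_theorem
    have h2 : M - lam • (1 : Matrix (Fin n) (Fin n) ℝ) =
        (h.eigenvectorUnitary : Matrix (Fin n) (Fin n) ℝ) *
          Matrix.diagonal (fun i => h.eigenvalues i - lam) *
          (h.eigenvectorUnitary : Matrix (Fin n) (Fin n) ℝ)ᴴ := by
      have hu : (h.eigenvectorUnitary : Matrix (Fin n) (Fin n) ℝ) *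
          (h.eigenvectorUnitary : Matrix (Fin n) (Fin n) ℝ)ᴴ = 1 :=
        Unitary.mul_star_self_of_mem h.eigenvectorUnitary.2
      have hd : Matrix.diagonal (fun i => h.eigenvalues i - lam) =
          Matrix.diagonal h.eigenvalues - lam • (1 : Matrix (Fin n) (Fin n) ℝ) := by
        ext i j
        by_cases hij : i = j <;> simp [hij, Matrix.one_apply]
      rw [hd, mul_sub, sub_mul, mul_smul_comm, smul_mul_assoc, mul_one, hu]
      congr 1
    rw [h2]
    apply Matrix.PosSemidef.mul_mul_conjTranspose_same
    apply Matrix.PosSemidef.diagonal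
    intro i
    simpa using he i
  have h3 := h1.dotProduct_mulVec_nonneg x
  simp only [star_trivial, Matrix.sub_mulVec, Matrix.smul_mulVec, Matrix.one_mulVec,
    dotProduct_sub, dotProduct_smul, smul_eq_mul] at h3
  linarith

lemma aux_quad2 (a g μ X Y Z : ℝ) (hμ : μ = a + g - Real.sqrt ((a - g) ^ 2 + 1))
    (hX : 0 ≤ X) (hY : 0 ≤ Y) (hZ : Z ^ 2 ≤ X * Y) :
    μ * (X + Y) ≤ 2 * a * X - 2 * Z + 2 * g * Y := by
  set s := Real.sqrt ((a - g) ^ 2 + 1) with hs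
  have hs2 : s ^ 2 = (a - g) ^ 2 + 1 := Real.sq_sqrt (by positivity)
  have hs0 : 0 ≤ s := Real.sqrt_nonneg _
  have hA : 0 ≤ s + (a - g) := by nlinarith
  have hB : 0 ≤ s - (a - g) := by nlinarith
  have hAB : (s + (a - g)) * (s - (a - g)) = 1 := by nlinarith
  have key : 2 * Z ≤ (s + (a - g)) * X + (s - (a - g)) * Y := by
    refine (abs_le_of_sq_le_sq' ?_ (by positivity)).2
    have : (2 * Z) ^ 2 ≤ 4 * (X * Y) := by nlinarith
    have h4 : X * Y = ((s + (a - g)) * X) * ((s - (a - g)) * Y) := by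
      linear_combination (- X * Y) * hAB
    nlinarith [sq_nonneg ((s + (a - g)) * X - (s - (a - g)) * Y)]
  rw [hμ]
  nlinarith

lemma aux_cs {n : ℕ} (x v : Fin n → ℝ) : (x ⬝ᵥ v) ^ 2 ≤ (x ⬝ᵥ x) * (v ⬝ᵥ v) := by
  have := Finset.sum_mul_sq_le_sq_mul_sq Finset.univ x v
  simpa [dotProduct, ← pow_two] using this

lemma aux_V {n : ℕ} (γ : ℝ) (z : (Fin n ⊕ Fin n) × Fin 2 → ℝ) :
    z ⬝ᵥ ((Matrix.fromBlocks (1 : Matrix (Fin n) (Fin n) ℝ)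
      (-(γ • (1 : Matrix (Fin n) (Fin n) ℝ)))
      (-(γ • (1 : Matrix (Fin n) (Fin n) ℝ))) 1) ⊗ₖ (1 : Matrix (Fin 2) (Fin 2) ℝ)).mulVec z
    = ∑ c, ∑ i, (z (Sum.inl i, c) * z (Sum.inl i, c) + z (Sum.inr i, c) * z (Sum.inr i, c)
      - 2 * γ * (z (Sum.inl i, c) * z (Sum.inr i, c))) := by
  rw [dotProduct, Fintype.sum_prod_type_right]
  refine Finset.sum_congr rfl fun c _ => ?_
  simp only [aux_kron, Fintype.sum_sum_type]
  rw [← Finset.sum_add_distrib]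
  refine Finset.sum_congr rfl fun i _ => ?_
  simp only [Matrix.fromBlocks_mulVec, Sum.elim_inl, Sum.elim_inr, Matrix.neg_mulVec,
    Matrix.smul_mulVec, Matrix.one_mulVec, Pi.add_apply, Pi.neg_apply, Pi.smul_apply,
    Function.comp_apply, smul_eq_mul]
  ring

lemma aux_N {n : ℕ} (z : (Fin n ⊕ Fin n) × Fin 2 → ℝ) :
    z ⬝ᵥ z = ∑ c, ∑ i, (z (Sum.inl i, c) * z (Sum.inl i, c)
      + z (Sum.inr i, c) * z (Sum.inr i, c)) := by
  rw [dotProduct, Fintype.sum_prod_type_right]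
  refine Finset.sum_congr rfl fun c _ => ?_
  simp only [Fintype.sum_sum_type]
  rw [← Finset.sum_add_distrib]

/-- second conclusion of Theorem 1 of the paper. Under the hypotheses of
Theorem 1 with `δ(t) ≡ 0` (the leader's input is exactly known), the error
`ε : [0,∞) → ℝ^{4n}` of `ε̇ = (F_{σ(t)} ⊗ I₂)ε` satisfies
`‖ε(t)‖² ≤ (V(ε(0))/(1-γ)) e^{-βt}` for all `t ≥ 0`, and `ε(t) → 0` as `t → ∞`,
where `V(z) = zᵀ(P ⊗ I₂)z`, `P = [[I, -γI],[-γI, I]]`, `β = μ̄/(2(1+γ))`,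
`μ̄ = (1-γ²)kλ̄ + γ - √(((1-γ²)kλ̄-γ)²+1)`. Here `z ⬝ᵥ z = ‖z‖²`. -/
theorem tracking_error_convergence_connected {n : ℕ} (hn : 1 ≤ n)
    {ι : Type} [Fintype ι]
    (M : ι → Matrix (Fin n) (Fin n) ℝ)
    (hM : ∀ p, (M p).PosDef)
    (lam : ℝ) (hlam : 0 < lam)
    (heig : ∀ p i, lam ≤ (hM p).1.eigenvalues i)
    (γ k : ℝ) (hγ0 : 0 < γ) (hγ1 : γ < 1)
    (hk : 1 / (4 * γ * (1 - γ ^ 2) * lam) < k)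
    (μ β : ℝ)
    (hμ : μ = (1 - γ ^ 2) * k * lam + γ -
      Real.sqrt (((1 - γ ^ 2) * k * lam - γ) ^ 2 + 1))
    (hβ : β = μ / (2 * (1 + γ)))
    (σ : ℝ → ι)
    (F : ι → Matrix (Fin n ⊕ Fin n) (Fin n ⊕ Fin n) ℝ)
    (hF : ∀ p, F p = Matrix.fromBlocks (-(k • M p))
      (1 : Matrix (Fin n) (Fin n) ℝ) (-((γ * k) • M p)) 0)
    (ε : ℝ → ((Fin n ⊕ Fin n) × Fin 2) → ℝ)
    (hODE : ∀ t, 0 ≤ t → HasDerivAt ε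
      (((F (σ t)) ⊗ₖ (1 : Matrix (Fin 2) (Fin 2) ℝ)).mulVec (ε t)) t)
    (P : Matrix (Fin n ⊕ Fin n) (Fin n ⊕ Fin n) ℝ)
    (hP : P = Matrix.fromBlocks (1 : Matrix (Fin n) (Fin n) ℝ)
      (-(γ • (1 : Matrix (Fin n) (Fin n) ℝ)))
      (-(γ • (1 : Matrix (Fin n) (Fin n) ℝ))) 1)
    (V : (((Fin n ⊕ Fin n) × Fin 2) → ℝ) → ℝ)
    (hV : ∀ z, V z = z ⬝ᵥ (P ⊗ₖ (1 : Matrix (Fin 2) (Fin 2) ℝ)).mulVec z) :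
    (∀ t, 0 ≤ t →
      ε t ⬝ᵥ ε t ≤ (V (ε 0) / (1 - γ)) * Real.exp (-β * t)) ∧
    Filter.Tendsto ε Filter.atTop (nhds 0) := by
  have hγ2 : 0 < 1 - γ ^ 2 := by nlinarith
  have hk0 : 0 < k := lt_trans (by positivity) hk
  have h4 : 1 < 4 * ((1 - γ ^ 2) * k * lam) * γ := by
    rw [div_lt_iff₀ (by positivity)] at hk
    linarith
  have hμ0 : 0 < μ := by
    have : Real.sqrt (((1 - γ ^ 2) * k * lam - γ) ^ 2 + 1) < (1 - γ ^ 2) * k * lam + γ := by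
      rw [Real.sqrt_lt' (by positivity)]
      nlinarith
    linarith
  have hβ0 : 0 < β := by rw [hβ]; positivity
  have hμβ : μ = 2 * β * (1 + γ) := by rw [hβ]; field_simp
  have hV' : ∀ z, V z = ∑ c, ∑ i, (z (Sum.inl i, c) * z (Sum.inl i, c)
      + z (Sum.inr i, c) * z (Sum.inr i, c)
      - 2 * γ * (z (Sum.inl i, c) * z (Sum.inr i, c))) := by
    intro z; rw [hV, hP, aux_V]
  have hlow : ∀ z, (1 - γ) * (z ⬝ᵥ z) ≤ V z := by
    intro z
    rw [hV', aux_N, Finset.mul_sum]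
    refine Finset.sum_le_sum fun c _ => ?_
    rw [Finset.mul_sum]
    refine Finset.sum_le_sum fun i _ => ?_
    nlinarith [mul_nonneg hγ0.le (sq_nonneg (z (Sum.inl i, c) - z (Sum.inr i, c)))]
  have hup : ∀ z, V z ≤ (1 + γ) * (z ⬝ᵥ z) := by
    intro z
    rw [hV', aux_N, Finset.mul_sum]
    refine Finset.sum_le_sum fun c _ => ?_
    rw [Finset.mul_sum]
    refine Finset.sum_le_sum fun i _ => ?_
    nlinarith [mul_nonneg hγ0.le (sq_nonneg (z (Sum.inl i, c) + z (Sum.inr i, c)))]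
  have hNN : ∀ z : (Fin n ⊕ Fin n) × Fin 2 → ℝ, 0 ≤ z ⬝ᵥ z := fun z =>
    Finset.sum_nonneg fun i _ => mul_self_nonneg _
  have hV0 : ∀ z, 0 ≤ V z := fun z =>
    le_trans (mul_nonneg (by linarith) (hNN z)) (hlow z)
  have hder : ∀ t, 0 ≤ t → ∃ d, HasDerivAt (fun s => V (ε s)) d t ∧ d ≤ - β * V (ε t) := by
    intro t ht
    have hc := hasDerivAt_pi.1 (hODE t ht)
    set M' := M (σ t) with hM'
    have hx : ∀ i c, HasDerivAt (fun s => ε s (Sum.inl i, c))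
        (-(k * (M'.mulVec (fun j => ε t (Sum.inl j, c))) i) + ε t (Sum.inr i, c)) t := by
      intro i c
      have := hc (Sum.inl i, c)
      rw [aux_kron, hF] at this
      simpa [Matrix.fromBlocks_mulVec, Matrix.neg_mulVec, Matrix.smul_mulVec,
        Function.comp_def] using this
    have hv : ∀ i c, HasDerivAt (fun s => ε s (Sum.inr i, c))
        (-(γ * k * (M'.mulVec (fun j => ε t (Sum.inl j, c))) i)) t := by
      intro i c
      have := hc (Sum.inr i, c)
      rw [aux_kron, hF] at this
      simpa [Matrix.fromBlocks_mulVec, Matrix.neg_mulVec, Matrix.smul_mulVec,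
        Function.comp_def] using this
    have hd := HasDerivAt.fun_sum (u := (Finset.univ : Finset (Fin 2))) fun c _ =>
      HasDerivAt.fun_sum (u := (Finset.univ : Finset (Fin n))) fun i _ =>
        (((hx i c).mul (hx i c)).add ((hv i c).mul (hv i c))).sub
          (((hx i c).mul (hv i c)).const_mul (2 * γ))
    refine ⟨_, hd.congr_of_eventuallyEq
      (Filter.Eventually.of_forall fun s => hV' (ε s)), ?_⟩
    · have h5 : - μ * (ε t ⬝ᵥ ε t) ≤ - β * V (ε t) := by
        have := mul_le_mul_of_nonneg_left (hup (ε t)) (by positivity : 0 ≤ 2 * β)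
        have := mul_nonneg hβ0.le (hV0 (ε t))
        rw [hμβ]; linarith
      refine le_trans ?_ h5
      rw [aux_N, Finset.mul_sum]
      refine Finset.sum_le_sum fun c _ => ?_
      set x : Fin n → ℝ := fun j => ε t (Sum.inl j, c) with hxd
      set v : Fin n → ℝ := fun j => ε t (Sum.inr j, c) with hvd
      have q1 := aux_eig M' (hM (σ t)).1 lam (heig (σ t)) x
      have q2 := aux_quad2 _ _ μ (x ⬝ᵥ x) (v ⬝ᵥ v) (x ⬝ᵥ v) hμ
        (Finset.sum_nonneg fun i _ => mul_self_nonneg _)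
        (Finset.sum_nonneg fun i _ => mul_self_nonneg _) (aux_cs x v)
      have q3 := mul_le_mul_of_nonneg_left q1 (by positivity : 0 ≤ 2 * (1 - γ ^ 2) * k)
      have q4 : ∑ i, (x i * x i + v i * v i) = x ⬝ᵥ x + v ⬝ᵥ v := by
        rw [Finset.sum_add_distrib]; rfl
      have q5 : - (2 * (1 - γ ^ 2) * k * (x ⬝ᵥ M'.mulVec x)) + 2 * (x ⬝ᵥ v)
          - 2 * γ * (v ⬝ᵥ v) ≤ - μ * ∑ i, (x i * x i + v i * v i) := by
        rw [q4]; linarith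
      refine le_trans (le_of_eq ?_) q5
      simp only [dotProduct, Finset.mul_sum, ← Finset.sum_neg_distrib, ← Finset.sum_add_distrib,
        ← Finset.sum_sub_distrib]
      refine Finset.sum_congr rfl fun i _ => ?_
      change _ = - (2 * (1 - γ ^ 2) * k * (x i * M'.mulVec x i)) + 2 * (x i * v i)
          - 2 * γ * (v i * v i)
      have e1 : ε t (Sum.inl i, c) = x i := rfl
      have e2 : ε t (Sum.inr i, c) = v i := rfl
      simp only [e1, e2]
      ring
  have hanti : AntitoneOn (fun t => Real.exp (β * t) * V (ε t)) (Set.Ici 0) := by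
    choose! d hd1 hd2 using hder
    have hf : ∀ t, 0 ≤ t → HasDerivAt (fun t => Real.exp (β * t) * V (ε t))
        (Real.exp (β * t) * (β * 1) * V (ε t) + Real.exp (β * t) * d t) t := fun t ht =>
      (((hasDerivAt_id t).const_mul β).exp).mul (hd1 t ht)
    apply antitoneOn_of_deriv_nonpos (convex_Ici 0)
    · exact fun t ht => (hf t ht).continuousAt.continuousWithinAt
    · intro t ht
      rw [interior_Ici] at ht
      exact (hf t (le_of_lt ht)).differentiableAt.differentiableWithinAt
    · intro t ht
      rw [interior_Ici] at ht
      rw [(hf t (le_of_lt ht)).deriv]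
      have := mul_le_mul_of_nonneg_left (hd2 t (le_of_lt ht)) (Real.exp_pos (β * t)).le
      linarith
  have hmain : ∀ t, 0 ≤ t →
      ε t ⬝ᵥ ε t ≤ (V (ε 0) / (1 - γ)) * Real.exp (-β * t) := by
    intro t ht
    have h1 := hanti (Set.mem_Ici.2 le_rfl) (Set.mem_Ici.2 ht) ht
    simp only [mul_zero, Real.exp_zero, one_mul] at h1
    have h2 : V (ε t) ≤ V (ε 0) * Real.exp (-β * t) := by
      have h3 := mul_le_mul_of_nonneg_right h1 (Real.exp_pos (-β * t)).le
      have h6 : Real.exp (β * t) * Real.exp (-β * t) = 1 := by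
        rw [← Real.exp_add]; simp
      calc V (ε t) = (Real.exp (β * t) * Real.exp (-β * t)) * V (ε t) := by rw [h6, one_mul]
        _ ≤ _ := by linarith
    rw [div_mul_eq_mul_div, le_div_iff₀ (by linarith)]
    linarith [hlow (ε t)]
  refine ⟨hmain, ?_⟩
  rw [tendsto_pi_nhds]
  intro j
  have hlim : Filter.Tendsto (fun t => (V (ε 0) / (1 - γ)) * Real.exp (-β * t))
      Filter.atTop (nhds 0) := by
    have h1 : Filter.Tendsto (fun t => -β * t) Filter.atTop Filter.atBot :=
      Filter.tendsto_id.const_mul_atTop_of_neg (by linarith)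
    simpa using (Real.tendsto_exp_atBot.comp h1).const_mul (V (ε 0) / (1 - γ))
  have hsq : Filter.Tendsto (fun t => (ε t j) ^ 2) Filter.atTop (nhds 0) := by
    refine squeeze_zero' (Filter.Eventually.of_forall fun t => sq_nonneg _) ?_ hlim
    filter_upwards [Filter.eventually_ge_atTop 0] with t ht
    refine le_trans ?_ (hmain t ht)
    rw [pow_two]
    exact Finset.single_le_sum (f := fun i => ε t i * ε t i)
      (fun i _ => mul_self_nonneg _) (Finset.mem_univ j)
  have habs := (Real.continuous_sqrt.tendsto 0).comp hsq
  rw [Real.sqrt_zero] at habs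
  simp only [Function.comp_def, Real.sqrt_sq_eq_abs] at habs
  exact (tendsto_zero_iff_abs_tendsto_zero _).2 habs
end

section
/- Let n ≥ 1 and let 𝒫 = 𝒫_c ∪ 𝒫_d be a finite index set, where for each p ∈ 𝒫_c the matrix M_p ∈ ℝ^{n×n} is symmetric positive definite with all eigenvalues ≥ λ̄ > 0, and for each p ∈ 𝒫_d the matrix M_p is symmetric positive semidefinite. Fix 0 < γ < 1 and k > 1/(4γ(1−γ²)λ̄); set μ̄ = (1−γ²)kλ̄ + γ − √(((1−γ²)kλ̄ − γ)² + 1), β = μ̄/(2(1+γ)), and α = 2(√(1+γ²) − γ)/(1−γ). Let σ : [0,∞) → 𝒫 be piecewise constant with dwell time τ > 0 (every maximal interval on which σ is constant has length ≥ τ). Let T > 0, T^c ∈ (0, T], T^d = T − T^c, and suppose that on every window [jT, (j+1)T), j = 0,1,2,…, the total length of the subintervals on which σ(t) ∈ 𝒫_c is at least T^c, the total length of those on which σ(t) ∈ 𝒫_d is at most T^d, and βT^c > α(T − T^c). Let δ̄ ≥ 0, δ : [0,∞) → ℝ² with ‖δ(t)‖ ≤ δ̄, and let ε : [0,∞) →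 ℝ^{4n} be continuous, piecewise differentiable, and satisfy ε̇(t) = (F_{σ(t)} ⊗ I₂)ε(t) + g(t) at every non-switching time, where F_p = [[−kM_p, Iₙ],[−γkM_p, 0]] and g(t) = (0, −𝟏ₙ ⊗ δ(t)). Then there exists a constant C ≥ 0, depending only on n, γ, k, λ̄, α, β, T, T^c and τ and proportional to δ̄, such that limsup_{t→∞} ‖ε(t)‖ ≤ C. -/
open Matrix Kronecker

lemma quad_lower {n : ℕ} (M : Matrix (Fin n) (Fin n) ℝ) (hM : M.IsHermitian) (lam : ℝ)
    (h : ∀ i, lam ≤ hM.eigenvalues i) (x : Fin n → ℝ) :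
    lam * ∑ i, x i ^ 2 ≤ ∑ i, x i * (M *ᵥ x) i := by
  have hps : (M - algebraMap ℝ _ lam).PosSemidef := by
    rw [Matrix.posSemidef_iff_isHermitian_and_spectrum_nonneg]
    refine ⟨hM.sub ?_, ?_⟩
    · rw [Matrix.algebraMap_eq_diagonal]
      exact Matrix.isHermitian_diagonal _
    · intro y hy
      have h1 : y + lam ∈ spectrum ℝ M := by
        have := spectrum.add_mem_add_iff (R := ℝ) (a := M - algebraMap ℝ _ lam) (r := y) (s := lam)
        rw [← this] at hy
        simpa using hy
      rw [hM.spectrum_real_eq_range_eigenvalues] at h1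
      obtain ⟨i, hi⟩ := h1
      have := h i
      simp only [Set.mem_ofPred_eq]
      linarith
  have h2 := hps.dotProduct_mulVec_nonneg x
  simp only [Matrix.sub_mulVec, dotProduct_sub, star_trivial] at h2
  have h3 : x ⬝ᵥ ((algebraMap ℝ (Matrix (Fin n) (Fin n) ℝ) lam) *ᵥ x) = lam * ∑ i, x i ^ 2 := by
    rw [Algebra.algebraMap_eq_smul_one, Matrix.smul_mulVec, Matrix.one_mulVec, dotProduct_smul]
    simp [dotProduct, pow_two]
  rw [h3] at h2
  simp only [dotProduct] at h2
  linarith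

lemma quad_nonneg {n : ℕ} (M : Matrix (Fin n) (Fin n) ℝ) (hM : M.PosSemidef) (x : Fin n → ℝ) :
    0 ≤ ∑ i, x i * (M *ᵥ x) i := by
  have h2 := hM.dotProduct_mulVec_nonneg x
  simpa [dotProduct] using h2

lemma young_term (γ η x v d : ℝ) (hγ0 : 0 < γ) (hγ1 : γ < 1) (hη : 0 < η) :
    2 * (γ * x - v) * d ≤ η * (x ^ 2 - 2 * γ * x * v + v ^ 2) + d ^ 2 / η := by
  have h1 : 2 * (γ * x - v) * d ≤ η * (γ * x - v) ^ 2 + d ^ 2 / η := by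
    have : η * (γ * x - v) ^ 2 + d ^ 2 / η - 2 * (γ * x - v) * d
        = (η * (γ * x - v) - d) ^ 2 / η := by field_simp; ring
    have h2 : 0 ≤ (η * (γ * x - v) - d) ^ 2 / η := by positivity
    linarith
  have h3 : 0 ≤ η * ((1 - γ ^ 2) * x ^ 2) := by
    have : 0 ≤ 1 - γ ^ 2 := by nlinarith
    positivity
  nlinarith

lemma conn_term (a γ μ β x v : ℝ) (hγ0 : 0 < γ) (hγ1 : γ < 1)
    (hμ : μ = a + γ - Real.sqrt ((a - γ) ^ 2 + 1)) (hμ0 : 0 < μ)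
    (hβ : β = μ / (2 * (1 + γ))) :
    -2 * a * x ^ 2 + 2 * x * v - 2 * γ * v ^ 2 ≤ -2 * β * (x ^ 2 - 2 * γ * x * v + v ^ 2) := by
  set s := Real.sqrt ((a - γ) ^ 2 + 1) with hs
  have hs2 : s ^ 2 = (a - γ) ^ 2 + 1 := Real.sq_sqrt (by positivity)
  have hs0 : 0 ≤ s := Real.sqrt_nonneg _
  have hp : 0 < s + (a - γ) := by
    by_contra hc
    nlinarith
  have key : 0 ≤ (s + (a - γ)) * ((s + (a - γ)) * x ^ 2 - 2 * x * v + (s - (a - γ)) * v ^ 2) := by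
    have : (s + (a - γ)) * ((s + (a - γ)) * x ^ 2 - 2 * x * v + (s - (a - γ)) * v ^ 2)
      = ((s + (a - γ)) * x - v) ^ 2 := by linear_combination v ^ 2 * hs2
    rw [this]; positivity
  have key2 := nonneg_of_mul_nonneg_right key hp
  have h1 : -2 * a * x ^ 2 + 2 * x * v - 2 * γ * v ^ 2 ≤ -μ * (x ^ 2 + v ^ 2) := by
    rw [hμ]; nlinarith
  have h2 : 2 * β * (1 + γ) = μ := by rw [hβ]; field_simp
  have hβ0 : 0 < β := by rw [hβ]; positivity
  have h3 : x ^ 2 - 2 * γ * x * v + v ^ 2 ≤ (1 + γ) * (x ^ 2 + v ^ 2) := by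
    nlinarith [mul_nonneg hγ0.le (sq_nonneg (x + v))]
  have h4 : 2 * β * (x ^ 2 - 2 * γ * x * v + v ^ 2) ≤ 2 * β * ((1 + γ) * (x ^ 2 + v ^ 2)) := by
    gcongr
  have h5 : 2 * β * ((1 + γ) * (x ^ 2 + v ^ 2)) = μ * (x ^ 2 + v ^ 2) := by rw [← h2]; ring
  linarith

lemma low_term (γ x v : ℝ) (hγ0 : 0 < γ) :
    (1 - γ) * (x ^ 2 + v ^ 2) ≤ x ^ 2 - 2 * γ * x * v + v ^ 2 := by
  nlinarith [mul_nonneg hγ0.le (sq_nonneg (x - v))]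

lemma disc_term (γ α x v : ℝ) (hγ0 : 0 < γ) (hγ1 : γ < 1)
    (hα : α = 2 * (Real.sqrt (1 + γ ^ 2) - γ) / (1 - γ)) :
    2 * x * v - 2 * γ * v ^ 2 ≤ α / 2 * (x ^ 2 - 2 * γ * x * v + v ^ 2) := by
  set s := Real.sqrt (1 + γ ^ 2) with hs
  have hs2 : s ^ 2 = 1 + γ ^ 2 := Real.sq_sqrt (by positivity)
  have hs0 : 0 ≤ s := Real.sqrt_nonneg _
  have hp : 0 < s - γ := by
    by_contra hc
    nlinarith
  have h0 : 0 < 1 - γ := by linarith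
  have hα2 : α / 2 * (1 - γ) = s - γ := by rw [hα]; field_simp
  have hα0 : 0 < α := by rw [hα]; positivity
  have key : 0 ≤ (s - γ) * ((s - γ) * x ^ 2 - 2 * x * v + (s + γ) * v ^ 2) := by
    have : (s - γ) * ((s - γ) * x ^ 2 - 2 * x * v + (s + γ) * v ^ 2)
      = ((s - γ) * x - v) ^ 2 := by linear_combination v ^ 2 * hs2
    rw [this]; positivity
  have key2 := nonneg_of_mul_nonneg_right key hp
  have h4 : α / 2 * ((1 - γ) * (x ^ 2 + v ^ 2)) ≤ α / 2 * (x ^ 2 - 2 * γ * x * v + v ^ 2) := by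
    gcongr; exact low_term γ x v hγ0
  have h5 : α / 2 * ((1 - γ) * (x ^ 2 + v ^ 2)) = (s - γ) * (x ^ 2 + v ^ 2) := by rw [← hα2]; ring
  nlinarith

lemma alpha_pos (γ α : ℝ) (hγ1 : γ < 1)
    (hα : α = 2 * (Real.sqrt (1 + γ ^ 2) - γ) / (1 - γ)) : 0 < α := by
  have h0 : 0 < 1 - γ := by linarith
  have : γ < Real.sqrt (1 + γ ^ 2) := Real.lt_sqrt_of_sq_lt (by linarith)
  rw [hα]
  have : 0 < Real.sqrt (1 + γ ^ 2) - γ := by linarith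
  positivity

/-- A continuous function with nonpositive derivative off the switching times decreases. -/
lemma decr_off_switch (ts : ℕ → ℝ) (h0 : ts 0 = 0)
    (htend : Filter.Tendsto ts Filter.atTop Filter.atTop)
    (hmono : StrictMono ts)
    (f f' : ℝ → ℝ) (hf : Continuous f) :
    ∀ a b : ℝ, 0 ≤ a → a ≤ b →
    (∀ t ∈ Set.Ioo a b, (∀ i, t ≠ ts i) → HasDerivAt f (f' t) t ∧ f' t ≤ 0) → f b ≤ f a := by
  have main : ∀ N : ℕ, ∀ a b : ℝ, 0 ≤ a → a ≤ b → b ≤ ts N →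
    (∀ t ∈ Set.Ioo a b, (∀ i, t ≠ ts i) → HasDerivAt f (f' t) t ∧ f' t ≤ 0) → f b ≤ f a := by
    intro N
    induction N with
    | zero =>
      intro a b ha hab hb _
      have : a = b := by linarith
      rw [this]
    | succ N ih =>
      intro a b ha hab hb hd
      have piece : ∀ c, ts N ≤ c → a ≤ c → c ≤ b → f b ≤ f c := by
        intro c hc hac hcb
        have hd' : ∀ t ∈ Set.Ioo c b, HasDerivAt f (f' t) t ∧ f' t ≤ 0 := by
          intro t ht
          refine hd t ⟨lt_of_le_of_lt hac ht.1, ht.2⟩ ?_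
          intro i hi
          have h1 : ts N < ts i := by rw [← hi]; exact lt_of_le_of_lt hc ht.1
          have h2 : ts i < ts (N + 1) := by rw [← hi]; exact lt_of_lt_of_le ht.2 hb
          have h1' := hmono.lt_iff_lt.1 h1
          have h2' := hmono.lt_iff_lt.1 h2
          omega
        have := antitoneOn_of_deriv_nonpos (convex_Icc c b) hf.continuousOn
          (fun t ht => by
            rw [interior_Icc] at ht
            exact (hd' t ht).1.differentiableAt.differentiableWithinAt)
          (fun t ht => by
            rw [interior_Icc] at ht
            rw [(hd' t ht).1.deriv]; exact (hd' t ht).2)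
        exact this (Set.left_mem_Icc.2 hcb) (Set.right_mem_Icc.2 hcb) hcb
      rcases le_total (ts N) a with h | h
      · exact piece a h le_rfl hab
      rcases le_total b (ts N) with h' | h'
      · exact ih a b ha hab h' hd
      · exact (piece (ts N) le_rfl h h').trans
          (ih a (ts N) ha h le_rfl fun t ht => hd t ⟨ht.1, lt_of_lt_of_le ht.2 h'⟩)
  intro a b ha hab hd
  obtain ⟨N, hN⟩ := (htend.eventually_ge_atTop b).exists
  exact main N a b ha hab hN hd

/-- occupation time -/
lemma occupation (ts : ℕ → ℝ) (h0 : ts 0 = 0) (hmono : StrictMono ts)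
    (htend : Filter.Tendsto ts Filter.atTop Filter.atTop) (C : Set ℝ)
    (hC : ∀ i, ∀ s ∈ Set.Ico (ts i) (ts (i + 1)), s ∈ C ↔ ts i ∈ C)
    (T Tc : ℝ) (hT : 0 < T)
    (hwin : ∀ j : ℕ, ENNReal.ofReal Tc ≤ MeasureTheory.volume
            {s : ℝ | s ∈ Set.Ico ((j : ℝ) * T) (((j : ℝ) + 1) * T) ∧ s ∈ C}) :
    ∃ m : ℝ → ℝ, Continuous m ∧
      (∀ s t, s ≤ t → 0 ≤ m t - m s ∧ m t - m s ≤ t - s) ∧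
      (∀ t, 0 ≤ t → (∀ i, t ≠ ts i) → t ∈ C → HasDerivAt m 1 t) ∧
      (∀ t, 0 ≤ t → (∀ i, t ≠ ts i) → t ∉ C → HasDerivAt m 0 t) ∧
      (∀ j : ℕ, Tc ≤ m (((j : ℝ) + 1) * T) - m ((j : ℝ) * T)) := by
  have hfind : ∀ t, 0 ≤ t → ∃ i, t ∈ Set.Ico (ts i) (ts (i + 1)) := by
    intro t ht
    have hex : ∃ N, t < ts N := (htend.eventually_gt_atTop t).exists
    classical
    have hs := Nat.find_spec hex
    have hm := fun k => Nat.find_min (m := k) hex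
    cases hN : Nat.find hex with
    | zero => rw [hN, h0] at hs; linarith
    | succ k =>
      rw [hN] at hs
      exact ⟨k, not_lt.1 (hm k (by omega)), hs⟩
  set A : Set ℝ := ⋃ i ∈ {i | ts i ∈ C}, Set.Ico (ts i) (ts (i + 1)) with hA
  have hAm : MeasurableSet A :=
    MeasurableSet.biUnion (Set.to_countable _) fun _ _ => measurableSet_Ico
  have hAC : ∀ t, 0 ≤ t → (t ∈ A ↔ t ∈ C) := by
    intro t ht
    simp only [hA, Set.mem_iUnion, Set.mem_ofPred_eq, exists_prop]
    constructor
    · rintro ⟨i, hi, hti⟩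
      exact (hC i t hti).2 hi
    · intro h
      obtain ⟨i, hi⟩ := hfind t ht
      exact ⟨i, (hC i t hi).1 h, hi⟩
  set φ : ℝ → ℝ := A.indicator (fun _ => (1 : ℝ)) with hφ
  have hφm : Measurable φ := measurable_const.indicator hAm
  have hφ0 : ∀ t, 0 ≤ φ t := fun t => Set.indicator_nonneg (fun _ _ => zero_le_one) t
  have hφ1 : ∀ t, φ t ≤ 1 := fun t => Set.indicator_le_self' (fun _ _ => zero_le_one) t
  have hint : ∀ a b, IntervalIntegrable φ MeasureTheory.volume a b := by
    intro a b
    refine (intervalIntegrable_const (c := (1:ℝ))).mono_fun hφm.aestronglyMeasurable ?_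
    refine Filter.Eventually.of_forall fun t => ?_
    change ‖φ t‖ ≤ ‖(1:ℝ)‖
    rw [Real.norm_of_nonneg (hφ0 t)]
    simpa using hφ1 t
  have hsub : ∀ s t, (∫ x in (0:ℝ)..t, φ x) - (∫ x in (0:ℝ)..s, φ x) = ∫ x in s..t, φ x :=
    fun s t => intervalIntegral.integral_interval_sub_left (hint _ _) (hint _ _)
  have hder : ∀ t, 0 ≤ t → (∀ i, t ≠ ts i) →
      HasDerivAt (fun t => ∫ x in (0:ℝ)..t, φ x) (φ t) t := by
    intro t ht hne
    refine intervalIntegral.integral_hasDerivAt_right (hint _ _)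
      hφm.stronglyMeasurable.stronglyMeasurableAtFilter ?_
    obtain ⟨i, hi⟩ := hfind t ht
    have hi0 : 0 ≤ ts i := by rw [← h0]; exact hmono.monotone (Nat.zero_le i)
    have hev : φ =ᶠ[nhds t] fun _ => φ t := by
      filter_upwards [Ioo_mem_nhds (lt_of_le_of_ne hi.1 (hne i).symm) hi.2] with u hu
      have h1 : u ∈ A ↔ t ∈ A := by
        rw [hAC t ht, hAC u (hi0.trans hu.1.le), hC i t hi, hC i u ⟨hu.1.le, hu.2⟩]
      by_cases h2 : t ∈ A
      · simp [hφ, h2, h1.2 h2]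
      · simp [hφ, h2, mt h1.1 h2]
    exact (continuousAt_const).congr hev.symm
  refine ⟨fun t => ∫ x in (0:ℝ)..t, φ x, intervalIntegral.continuous_primitive hint 0, ?_, ?_, ?_, ?_⟩
  · intro s t hst
    simp only [hsub]
    refine ⟨intervalIntegral.integral_nonneg_of_forall hst hφ0, ?_⟩
    calc ∫ x in s..t, φ x ≤ ∫ x in s..t, (1:ℝ) :=
          intervalIntegral.integral_mono hst (hint _ _) intervalIntegrable_const hφ1
      _ = t - s := by simp
  · intro t ht hne htC
    have := hder t ht hne
    rwa [hφ, Set.indicator_of_mem ((hAC t ht).2 htC)] at this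
  · intro t ht hne htC
    have := hder t ht hne
    rwa [hφ, Set.indicator_of_notMem (mt (hAC t ht).1 htC)] at this
  · intro j
    simp only [hsub]
    have hjT : (0:ℝ) ≤ j * T := by positivity
    have hle : (j:ℝ) * T ≤ (j + 1) * T := by nlinarith
    rw [intervalIntegral.integral_of_le hle, hφ, ← MeasureTheory.integral_Ico_eq_integral_Ioc,
      MeasureTheory.setIntegral_indicator hAm, MeasureTheory.setIntegral_const, smul_eq_mul,
      mul_one]
    have hset : {s : ℝ | s ∈ Set.Ico ((j : ℝ) * T) (((j : ℝ) + 1) * T) ∧ s ∈ C}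
        = Set.Ico ((j : ℝ) * T) (((j : ℝ) + 1) * T) ∩ A := by
      ext u
      constructor
      · rintro ⟨h1, h2⟩
        exact ⟨h1, (hAC u (hjT.trans h1.1)).2 h2⟩
      · rintro ⟨h1, h2⟩
        exact ⟨h1, (hAC u (hjT.trans h1.1)).1 h2⟩
    have hw := hwin j
    rw [hset] at hw
    have hfin : MeasureTheory.volume (Set.Ico ((j : ℝ) * T) (((j : ℝ) + 1) * T) ∩ A) ≠ ⊤ :=
      ((MeasureTheory.measure_mono Set.inter_subset_left).trans_lt measure_Ico_lt_top).ne
    exact (ENNReal.ofReal_le_iff_le_toReal hfin).1 hw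

lemma comparison (ts : ℕ → ℝ) (h0 : ts 0 = 0) (hmono : StrictMono ts)
    (htend : Filter.Tendsto ts Filter.atTop Filter.atTop) (C : Set ℝ)
    (T Tc a b D : ℝ) (hT : 0 < T) (ha : 0 ≤ a) (hb : 0 ≤ b) (hD : 0 ≤ D)
    (hab : a * T - b * Tc < 0)
    (m : ℝ → ℝ) (hmc : Continuous m)
    (hm1 : ∀ s t, s ≤ t → 0 ≤ m t - m s ∧ m t - m s ≤ t - s)
    (hm2 : ∀ t, 0 ≤ t → (∀ i, t ≠ ts i) → t ∈ C → HasDerivAt m 1 t)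
    (hm3 : ∀ t, 0 ≤ t → (∀ i, t ≠ ts i) → t ∉ C → HasDerivAt m 0 t)
    (hm4 : ∀ j : ℕ, Tc ≤ m (((j : ℝ) + 1) * T) - m ((j : ℝ) * T))
    (V V' : ℝ → ℝ) (hVc : Continuous V) (hV0 : ∀ t, 0 ≤ V t)
    (hVd : ∀ t, 0 ≤ t → (∀ i, t ≠ ts i) → HasDerivAt V (V' t) t)
    (hVC : ∀ t, 0 ≤ t → (∀ i, t ≠ ts i) → t ∈ C → V' t ≤ (a - b) * V t + D)
    (hVN : ∀ t, 0 ≤ t → (∀ i, t ≠ ts i) → t ∉ C → V' t ≤ a * V t + D) :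
    ∀ t, 0 ≤ t → V t ≤ Real.exp (a * T) * (Real.exp (a * T - b * Tc) ^ ⌊t / T⌋₊ * V 0 +
      D * Real.exp (b * T) * T / (1 - Real.exp (a * T - b * Tc))) := by
  have step : ∀ s t, 0 ≤ s → s ≤ t → t ≤ s + T →
      V t ≤ Real.exp (a * (t - s) - b * (m t - m s)) * (V s + D * Real.exp (b * T) * T) := by
    intro s t hs hst htT
    set R : ℝ → ℝ := fun u => a * (u - s) - b * (m u - m s) with hR
    have hRc : Continuous R := by fun_prop
    have hd := decr_off_switch ts h0 htend hmono
      (fun u => V u * Real.exp (-R u) - D * Real.exp (b * T) * (u - s))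
      (fun u => (V' u - deriv R u * V u) * Real.exp (-R u) - D * Real.exp (b * T))
      (by fun_prop) s t hs hst (by
        intro u hu hne
        have hu0 : 0 ≤ u := hs.trans hu.1.le
        have hRm : ∀ c, HasDerivAt m c u → HasDerivAt R (a - b * c) u := by
          intro c hc
          have h1 : HasDerivAt R (a * 1 - b * c) u :=
            (((hasDerivAt_id u).sub_const s).const_mul a).sub ((hc.sub_const _).const_mul b)
          simpa using h1
        have hRd : HasDerivAt R (deriv R u) u ∧ V' u - deriv R u * V u ≤ D := by
          by_cases huC : u ∈ C
          · have h1 := hRm 1 (hm2 u hu0 hne huC)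
            have h2 := hVC u hu0 hne huC
            rw [h1.deriv]
            refine ⟨h1, ?_⟩
            linarith
          · have h1 := hRm 0 (hm3 u hu0 hne huC)
            have h2 := hVN u hu0 hne huC
            rw [h1.deriv]
            refine ⟨h1, ?_⟩
            linarith
        constructor
        · have h1 := ((hVd u hu0 hne).mul hRd.1.neg.exp).sub
            (((hasDerivAt_id u).sub_const s).const_mul (D * Real.exp (b * T)))
          refine h1.congr_deriv ?_
          simp only [Pi.neg_apply]
          ring
        · have h1 : Real.exp (-R u) ≤ Real.exp (b * T) := by
            rw [Real.exp_le_exp, hR]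
            have h2 := hm1 s u hu.1.le
            have h3 : b * (m u - m s) ≤ b * T := by
              gcongr
              linarith [hu.2]
            have h4 : 0 ≤ a * (u - s) := mul_nonneg ha (by linarith [hu.1])
            simp only
            linarith
          have h5 : (V' u - deriv R u * V u) * Real.exp (-R u) ≤ D * Real.exp (-R u) := by
            gcongr
            exact hRd.2
          have h6 : D * Real.exp (-R u) ≤ D * Real.exp (b * T) := by gcongr
          linarith)
    have hRs : R s = 0 := by simp [hR]
    simp only [hRs, neg_zero, Real.exp_zero, mul_one, sub_self, mul_zero, sub_zero] at hd
    have h7 : D * Real.exp (b * T) * (t - s) ≤ D * Real.exp (b * T) * T := by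
      gcongr
      linarith
    have h8 : V t = Real.exp (R t) * (V t * Real.exp (-R t)) := by
      rw [mul_left_comm, ← Real.exp_add]; simp
    rw [h8]
    gcongr
    linarith
  set q := Real.exp (a * T - b * Tc) with hq
  have hq0 : 0 < q := Real.exp_pos _
  have hq1 : q < 1 := by
    have := Real.exp_lt_exp.2 hab
    simpa [hq] using this
  set E := D * Real.exp (b * T) * T with hE
  have hE0 : 0 ≤ E := by positivity
  have hseq : ∀ j : ℕ, V (j * T) + E ≤ q ^ j * V 0 + E / (1 - q) := by
    have hqe : E / (1 - q) = E + q * (E / (1 - q)) := by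
      have : 1 - q ≠ 0 := by linarith
      field_simp
      ring
    have hEq0 : 0 ≤ E / (1 - q) := div_nonneg hE0 (by linarith)
    intro j
    induction j with
    | zero =>
      have := mul_nonneg hq0.le hEq0
      simp
      linarith
    | succ j ih =>
      have hjT : (0:ℝ) ≤ j * T := by positivity
      have h1 := step (j * T) (((j:ℝ) + 1) * T) hjT (by linarith) (by linarith)
      have h2 : Real.exp (a * (((j:ℝ) + 1) * T - j * T) - b * (m (((j:ℝ) + 1) * T) - m (j * T)))
          ≤ q := by
        rw [hq, Real.exp_le_exp]
        have h3 : b * Tc ≤ b * (m (((j:ℝ) + 1) * T) - m (j * T)) := by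
          gcongr
          exact hm4 j
        have h4 : a * (((j:ℝ) + 1) * T - j * T) = a * T := by ring
        linarith
      have h5 : V (((j:ℝ) + 1) * T) ≤ q * (q ^ j * V 0 + E / (1 - q)) := by
        refine h1.trans ?_
        refine mul_le_mul h2 ih ?_ hq0.le
        have := hV0 (j * T)
        positivity
      push_cast
      rw [pow_succ]
      linarith
  intro t ht
  set j := ⌊t / T⌋₊ with hj
  have hj1 : (j:ℝ) * T ≤ t := by
    have := Nat.floor_le (div_nonneg ht hT.le)
    rwa [le_div_iff₀ hT] at this
  have hj2 : t ≤ j * T + T := by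
    have := (Nat.lt_floor_add_one (t / T)).le
    rw [div_le_iff₀ hT] at this
    linarith
  have hjT : (0:ℝ) ≤ j * T := by positivity
  refine (step _ t hjT hj1 hj2).trans ?_
  refine mul_le_mul ?_ (hseq j) ?_ (Real.exp_pos _).le
  · rw [Real.exp_le_exp]
    have h1 := mul_nonneg hb (hm1 _ t hj1).1
    have h2 : a * (t - j * T) ≤ a * T := by gcongr; linarith
    linarith
  · have := hV0 (j * T)
    positivity

/-- Lyapunov derivative estimate, summed form. -/
lemma lyap_sum {n : ℕ} (M : Matrix (Fin n) (Fin n) ℝ) (k γ η l r : ℝ)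
    (hk : 0 ≤ k) (hγ0 : 0 < γ) (hγ1 : γ < 1) (hη : 0 < η)
    (hM : ∀ x : Fin n → ℝ, l * ∑ i, x i ^ 2 ≤ ∑ i, x i * (M *ᵥ x) i)
    (hr : ∀ x v : ℝ, -2 * ((1 - γ ^ 2) * k * l) * x ^ 2 + 2 * x * v - 2 * γ * v ^ 2 ≤
      r * (x ^ 2 - 2 * γ * x * v + v ^ 2))
    (x v : Fin n → ℝ) (d : ℝ) :
    ∑ i, (2 * x i * (-(k * (M *ᵥ x) i) + v i)
      - 2 * γ * ((-(k * (M *ᵥ x) i) + v i) * v i + x i * (-(γ * k * (M *ᵥ x) i) - d))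
      + 2 * v i * (-(γ * k * (M *ᵥ x) i) - d)) ≤
    (r + η) * ∑ i, (x i ^ 2 - 2 * γ * x i * v i + v i ^ 2) + n * d ^ 2 / η := by
  have hg : 0 ≤ 2 * ((1 - γ ^ 2) * k) := by
    have : 0 ≤ 1 - γ ^ 2 := by nlinarith
    positivity
  have h1 := mul_le_mul_of_nonneg_left (hM x) hg
  have h2 : ∀ i, -2 * ((1 - γ ^ 2) * k * l) * x i ^ 2 + 2 * x i * v i - 2 * γ * v i ^ 2
      + 2 * (γ * x i - v i) * d ≤
      (r + η) * (x i ^ 2 - 2 * γ * x i * v i + v i ^ 2) + d ^ 2 / η := by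
    intro i
    have := hr (x i) (v i)
    have := young_term γ η (x i) (v i) d hγ0 hγ1 hη
    linarith
  have h3 := Finset.sum_le_sum (s := Finset.univ) fun i _ => h2 i
  have h4 : ∑ i, (2 * x i * (-(k * (M *ᵥ x) i) + v i)
      - 2 * γ * ((-(k * (M *ᵥ x) i) + v i) * v i + x i * (-(γ * k * (M *ᵥ x) i) - d))
      + 2 * v i * (-(γ * k * (M *ᵥ x) i) - d)) =
      ∑ i, (-2 * ((1 - γ ^ 2) * k * l) * x i ^ 2 + 2 * x i * v i - 2 * γ * v i ^ 2
      + 2 * (γ * x i - v i) * d) + 2 * ((1 - γ ^ 2) * k) * (l * ∑ i, x i ^ 2)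
      - 2 * ((1 - γ ^ 2) * k) * ∑ i, x i * (M *ᵥ x) i := by
    simp only [Finset.mul_sum, ← Finset.sum_add_distrib, ← Finset.sum_sub_distrib]
    refine Finset.sum_congr rfl fun i _ => ?_
    ring
  rw [h4]
  have h5 : ∑ i, ((r + η) * (x i ^ 2 - 2 * γ * x i * v i + v i ^ 2) + d ^ 2 / η) =
    (r + η) * ∑ i, (x i ^ 2 - 2 * γ * x i * v i + v i ^ 2) + n * d ^ 2 / η := by
    rw [Finset.sum_add_distrib, ← Finset.mul_sum]
    simp [mul_div_assoc]
  linarith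

lemma kron_inl {n : ℕ} (M : Matrix (Fin n) (Fin n) ℝ) (k γ : ℝ)
    (e : ((Fin n ⊕ Fin n) × Fin 2) → ℝ) (i : Fin n) (q : Fin 2) :
    ((Matrix.fromBlocks (-(k • M)) (1 : Matrix (Fin n) (Fin n) ℝ)
      (-((γ * k) • M)) 0) ⊗ₖ (1 : Matrix (Fin 2) (Fin 2) ℝ)).mulVec e (Sum.inl i, q) =
    -(k * (M *ᵥ fun j => e (Sum.inl j, q)) i) + e (Sum.inr i, q) := by
  simp [Matrix.mulVec, dotProduct, Fintype.sum_prod_type, Matrix.one_apply, Finset.mul_sum,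
    mul_assoc]

lemma kron_inr {n : ℕ} (M : Matrix (Fin n) (Fin n) ℝ) (k γ : ℝ)
    (e : ((Fin n ⊕ Fin n) × Fin 2) → ℝ) (i : Fin n) (q : Fin 2) :
    ((Matrix.fromBlocks (-(k • M)) (1 : Matrix (Fin n) (Fin n) ℝ)
      (-((γ * k) • M)) 0) ⊗ₖ (1 : Matrix (Fin 2) (Fin 2) ℝ)).mulVec e (Sum.inr i, q) =
    -(γ * k * (M *ᵥ fun j => e (Sum.inl j, q)) i) := by
  simp [Matrix.mulVec, dotProduct, Fintype.sum_prod_type, Matrix.one_apply, Finset.mul_sum,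
    mul_assoc]

/-- Theorem 2 of the paper. The switching signal `σ` (piecewise constant
with dwell time `τ`, switching times `ts i`) may visit both "connected" indices `p ∈ Pc`
(where `M p` is symmetric positive definite with eigenvalues `≥ λ̄ > 0`) and "disconnected"
indices `p ∈ Pd` (where `M p` is only symmetric positive semidefinite).  With
`0 < γ < 1`, `k > 1/(4γ(1-γ²)λ̄)`, `μ̄ = (1-γ²)kλ̄ + γ - √(((1-γ²)kλ̄-γ)²+1)`,
`β = μ̄/(2(1+γ))`, `α = 2(√(1+γ²)-γ)/(1-γ)`, if on each window `[jT,(j+1)T)` the total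
time with `σ(t) ∈ Pc` is at least `T^c`, the total time with `σ(t) ∈ Pd` is at most
`T - T^c`, and `βT^c > α(T - T^c)`, then there is a constant `C₀ ≥ 0`, depending only on
`n, γ, k, λ̄, α, β, T, T^c, τ`, such that every solution `ε` of the switched error system
`ε̇ = (F_{σ(t)} ⊗ I₂)ε + g` (with `‖δ(t)‖ ≤ δ̄`) satisfies
`limsup_{t→∞} ‖ε(t)‖ ≤ C₀·δ̄` (a bound proportional to `δ̄`). Here `z ⬝ᵥ z = ‖z‖²`. -/
theorem tracking_error_bound_jointly_connected {n : ℕ} (hn : 1 ≤ n)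
    (lam γ k T Tc τ : ℝ)
    (hlam : 0 < lam) (hγ0 : 0 < γ) (hγ1 : γ < 1)
    (hk : 1 / (4 * γ * (1 - γ ^ 2) * lam) < k)
    (hT : 0 < T) (hTc0 : 0 < Tc) (hTcT : Tc ≤ T) (hτ : 0 < τ)
    (μ β α : ℝ)
    (hμ : μ = (1 - γ ^ 2) * k * lam + γ -
      Real.sqrt (((1 - γ ^ 2) * k * lam - γ) ^ 2 + 1))
    (hβ : β = μ / (2 * (1 + γ)))
    (hα : α = 2 * (Real.sqrt (1 + γ ^ 2) - γ) / (1 - γ))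
    (hwin : α * (T - Tc) < β * Tc) :
    ∃ C₀ : ℝ, 0 ≤ C₀ ∧
      ∀ (ι : Type) (_ : Fintype ι) (Pc Pd : Set ι), Pc ∪ Pd = Set.univ →
      ∀ (M : ι → Matrix (Fin n) (Fin n) ℝ)
        (hMc : ∀ p ∈ Pc, (M p).PosDef),
        (∀ (p : ι) (hp : p ∈ Pc) (i : Fin n), lam ≤ (hMc p hp).1.eigenvalues i) →
        (∀ p ∈ Pd, (M p).PosSemidef) →
      ∀ (δbar : ℝ), 0 ≤ δbar →
      ∀ (σ : ℝ → ι) (ts : ℕ → ℝ),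
        ts 0 = 0 → StrictMono ts →
        (∀ i, τ ≤ ts (i + 1) - ts i) →
        Filter.Tendsto ts Filter.atTop Filter.atTop →
        (∀ i, ∀ s ∈ Set.Ico (ts i) (ts (i + 1)), σ s = σ (ts i)) →
        (∀ j : ℕ, ENNReal.ofReal Tc ≤
          MeasureTheory.volume
            {s : ℝ | s ∈ Set.Ico ((j : ℝ) * T) (((j : ℝ) + 1) * T) ∧ σ s ∈ Pc}) →
        (∀ j : ℕ,
          MeasureTheory.volume
            {s : ℝ | s ∈ Set.Ico ((j : ℝ) * T) (((j : ℝ) + 1) * T) ∧ σ s ∈ Pd} ≤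
              ENNReal.ofReal (T - Tc)) →
      ∀ (δ : ℝ → Fin 2 → ℝ), (∀ t, 0 ≤ t → δ t ⬝ᵥ δ t ≤ δbar ^ 2) →
      ∀ (ε : ℝ → ((Fin n ⊕ Fin n) × Fin 2) → ℝ), Continuous ε →
        (∀ s, 0 ≤ s → (∀ i, s ≠ ts i) →
          HasDerivAt ε
            (((Matrix.fromBlocks (-(k • M (σ s))) (1 : Matrix (Fin n) (Fin n) ℝ)
                  (-((γ * k) • M (σ s))) 0) ⊗ₖ
                (1 : Matrix (Fin 2) (Fin 2) ℝ)).mulVec (ε s) +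
              fun iq => Sum.elim (fun _ => (0 : ℝ)) (fun _ => -δ s iq.2) iq.1) s) →
        Filter.limsup (fun t => Real.sqrt (ε t ⬝ᵥ ε t)) Filter.atTop ≤ C₀ * δbar := by
  have hα0 : 0 < α := alpha_pos γ α hγ1 hα
  have hβ0 : 0 < β := by
    have h1 : 0 ≤ α * (T - Tc) := mul_nonneg hα0.le (by linarith)
    have h2 : 0 < β * Tc := by linarith
    exact pos_of_mul_pos_left h2 hTc0.le
  have hμ0 : 0 < μ := by
    have h1 : μ = β * (2 * (1 + γ)) := by rw [hβ]; field_simp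
    rw [h1]; positivity
  have hγ2 : 0 < 1 - γ ^ 2 := by nlinarith
  have hγ3 : 0 < 1 - γ := by linarith
  have hk0 : 0 < k := lt_trans (by positivity) hk
  obtain ⟨η, hη⟩ : ∃ η, η = β * Tc / T := ⟨_, rfl⟩
  have hη0 : 0 < η := by rw [hη]; positivity
  obtain ⟨a, ha⟩ : ∃ a, a = α / 2 + η := ⟨_, rfl⟩
  obtain ⟨b, hb⟩ : ∃ b, b = 2 * β + α / 2 := ⟨_, rfl⟩
  have ha0 : 0 < a := by rw [ha]; positivity
  have hb0 : 0 < b := by rw [hb]; positivity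
  have hab : a * T - b * Tc < 0 := by
    have h1 : η * T = β * Tc := by rw [hη]; field_simp
    have h2 : 0 ≤ α * (T - Tc) := mul_nonneg hα0.le (by linarith)
    rw [ha, hb]
    nlinarith
  have hq1 : 0 < 1 - Real.exp (a * T - b * Tc) := by
    have := Real.exp_lt_exp.2 hab
    rw [Real.exp_zero] at this
    linarith
  obtain ⟨H, hH⟩ : ∃ H, H = Real.exp (a * T) * ((n / η) * Real.exp (b * T) * T /
    (1 - Real.exp (a * T - b * Tc))) / (1 - γ) := ⟨_, rfl⟩
  have hH0 : 0 ≤ H := by rw [hH]; positivity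
  refine ⟨Real.sqrt H, Real.sqrt_nonneg _, ?_⟩
  intro ι _ Pc Pd hPP M hMc hMlam hMd δbar hδbar σ ts ts0 tsmono _ tstend hσ hwc _ δ hδ ε hεc hode
  obtain ⟨m, hmc, hm1, hm2, hm3, hm4⟩ := occupation ts ts0 tsmono tstend {s | σ s ∈ Pc}
    (fun i s hs => by
      have h1 := hσ i s hs
      change σ s ∈ Pc ↔ σ (ts i) ∈ Pc
      rw [h1]) T Tc hT hwc
  set V : ℝ → ℝ := fun t => ∑ q : Fin 2, ∑ i : Fin n, (ε t (Sum.inl i, q) ^ 2 -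
    2 * γ * ε t (Sum.inl i, q) * ε t (Sum.inr i, q) + ε t (Sum.inr i, q) ^ 2) with hV
  set V' : ℝ → ℝ := fun t => ∑ q : Fin 2, ∑ i : Fin n,
    (2 * ε t (Sum.inl i, q) * (-(k * (M (σ t) *ᵥ fun j => ε t (Sum.inl j, q)) i)
        + ε t (Sum.inr i, q))
      - 2 * γ * ((-(k * (M (σ t) *ᵥ fun j => ε t (Sum.inl j, q)) i) + ε t (Sum.inr i, q))
          * ε t (Sum.inr i, q)
        + ε t (Sum.inl i, q) *
          (-(γ * k * (M (σ t) *ᵥ fun j => ε t (Sum.inl j, q)) i) - δ t q))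
      + 2 * ε t (Sum.inr i, q) *
          (-(γ * k * (M (σ t) *ᵥ fun j => ε t (Sum.inl j, q)) i) - δ t q)) with hV'
  have hεi : ∀ z, Continuous fun t => ε t z := fun z => (continuous_apply z).comp hεc
  have hVc : Continuous V := by
    refine continuous_finset_sum _ fun q _ => continuous_finset_sum _ fun i _ => ?_
    have := hεi (Sum.inl i, q)
    have := hεi (Sum.inr i, q)
    fun_prop
  have hsq : ∀ t, ε t ⬝ᵥ ε t =
      ∑ q : Fin 2, ∑ i : Fin n, (ε t (Sum.inl i, q) ^ 2 + ε t (Sum.inr i, q) ^ 2) := by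
    intro t
    rw [dotProduct, Fintype.sum_prod_type_right]
    refine Finset.sum_congr rfl fun q _ => ?_
    rw [Fintype.sum_sum_type, ← Finset.sum_add_distrib]
    refine Finset.sum_congr rfl fun i _ => ?_
    ring
  have hVlow : ∀ t, (1 - γ) * (ε t ⬝ᵥ ε t) ≤ V t := by
    intro t
    rw [hsq, Finset.mul_sum]
    refine Finset.sum_le_sum fun q _ => ?_
    rw [Finset.mul_sum]
    exact Finset.sum_le_sum fun i _ => low_term γ _ _ hγ0
  have hsq0 : ∀ t, 0 ≤ ε t ⬝ᵥ ε t := by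
    intro t
    rw [hsq]
    positivity
  have hV0 : ∀ t, 0 ≤ V t := fun t => (mul_nonneg hγ3.le (hsq0 t)).trans (hVlow t)
  have hVd : ∀ t, 0 ≤ t → (∀ i, t ≠ ts i) → HasDerivAt V (V' t) t := by
    intro t ht hne
    have hc := hasDerivAt_pi.1 (hode t ht hne)
    refine HasDerivAt.fun_sum fun q _ => HasDerivAt.fun_sum fun i _ => ?_
    have hx := hc (Sum.inl i, q)
    have hv := hc (Sum.inr i, q)
    rw [Pi.add_apply, kron_inl] at hx
    rw [Pi.add_apply, kron_inr] at hv
    have := ((hx.pow 2).sub ((hx.const_mul (2 * γ)).mul hv)).add (hv.pow 2)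
    refine this.congr_deriv ?_
    simp only [Sum.elim_inl, Sum.elim_inr]
    push_cast
    ring
  have hsum : ∀ t, 0 ≤ t → ∀ l r : ℝ,
      (∀ x : Fin n → ℝ, l * ∑ i, x i ^ 2 ≤ ∑ i, x i * (M (σ t) *ᵥ x) i) →
      (∀ x v : ℝ, -2 * ((1 - γ ^ 2) * k * l) * x ^ 2 + 2 * x * v - 2 * γ * v ^ 2 ≤
        r * (x ^ 2 - 2 * γ * x * v + v ^ 2)) →
      V' t ≤ (r + η) * V t + n / η * δbar ^ 2 := by
    intro t ht l r hl hr
    have h1 : V' t ≤ ∑ q : Fin 2, ((r + η) * ∑ i, (ε t (Sum.inl i, q) ^ 2 -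
        2 * γ * ε t (Sum.inl i, q) * ε t (Sum.inr i, q) + ε t (Sum.inr i, q) ^ 2)
        + n * δ t q ^ 2 / η) :=
      Finset.sum_le_sum fun q _ => lyap_sum (M (σ t)) k γ η l r hk0.le hγ0 hγ1 hη0 hl hr
        (fun i => ε t (Sum.inl i, q)) (fun i => ε t (Sum.inr i, q)) (δ t q)
    rw [Finset.sum_add_distrib, ← Finset.mul_sum] at h1
    have h2 : ∑ q : Fin 2, n * δ t q ^ 2 / η = n / η * (δ t ⬝ᵥ δ t) := by
      rw [dotProduct, Finset.mul_sum]
      refine Finset.sum_congr rfl fun q _ => ?_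
      ring
    have h3 : n / η * (δ t ⬝ᵥ δ t) ≤ n / η * δbar ^ 2 := by
      gcongr
      exact hδ t ht
    rw [h2] at h1
    exact h1.trans (by linarith)
  have hbound := comparison ts ts0 tsmono tstend {s | σ s ∈ Pc} T Tc a b (n / η * δbar ^ 2)
    hT ha0.le hb0.le (by positivity) hab m hmc hm1 hm2 hm3 hm4 V V' hVc hV0 hVd
    (by
      intro t ht _ htC
      have h := hsum t ht lam (-2 * β)
        (fun x => quad_lower (M (σ t)) (hMc _ htC).1 lam (hMlam _ htC) x)
        (fun x v => conn_term ((1 - γ ^ 2) * k * lam) γ μ β x v hγ0 hγ1 hμ hμ0 hβ)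
      have h1 : a - b = -2 * β + η := by rw [ha, hb]; ring
      rwa [h1])
    (by
      intro t ht _ htC
      have htD : σ t ∈ Pd := by
        have h1 : σ t ∈ Pc ∪ Pd := by rw [hPP]; trivial
        exact h1.resolve_left htC
      have h := hsum t ht 0 (α / 2)
        (fun x => by simpa using quad_nonneg (M (σ t)) (hMd _ htD) x)
        (fun x v => by simpa using disc_term γ α x v hγ0 hγ1 hα)
      rwa [ha])
  set q := Real.exp (a * T - b * Tc) with hq
  have hq0 : 0 < q := Real.exp_pos _
  have hpow : Filter.Tendsto (fun t : ℝ => q ^ ⌊t / T⌋₊) Filter.atTop (nhds 0) :=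
    (tendsto_pow_atTop_nhds_zero_of_lt_one hq0.le (by linarith)).comp
      (tendsto_nat_floor_atTop.comp (Filter.tendsto_id.atTop_div_const hT))
  have hlim : Filter.Tendsto (fun t : ℝ => Real.sqrt (Real.exp (a * T) * (q ^ ⌊t / T⌋₊ * V 0 +
      n / η * δbar ^ 2 * Real.exp (b * T) * T / (1 - q)) / (1 - γ))) Filter.atTop
      (nhds (Real.sqrt H * δbar)) := by
    have h1 : Real.sqrt H * δbar = Real.sqrt (Real.exp (a * T) * (0 * V 0 +
      n / η * δbar ^ 2 * Real.exp (b * T) * T / (1 - q)) / (1 - γ)) := by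
      have h2 : Real.exp (a * T) * (0 * V 0 +
        n / η * δbar ^ 2 * Real.exp (b * T) * T / (1 - q)) / (1 - γ) = H * δbar ^ 2 := by
        rw [hH]; ring
      rw [h2, Real.sqrt_mul hH0, Real.sqrt_sq hδbar]
    rw [h1]
    exact (((hpow.mul_const _).add_const _).const_mul _ |>.div_const _).sqrt
  rw [← hlim.limsup_eq]
  refine Filter.limsup_le_limsup ?_ ?_ hlim.isBoundedUnder_le
  · filter_upwards [Filter.eventually_ge_atTop 0] with t ht
    refine Real.sqrt_le_sqrt ?_
    rw [le_div_iff₀ hγ3]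
    have h1 := hbound t ht
    have h2 := hVlow t
    linarith
  · exact (Filter.isBoundedUnder_of ⟨0, fun t => Real.sqrt_nonneg _⟩ :
      Filter.IsBoundedUnder (· ≥ ·) Filter.atTop _).isCoboundedUnder_le
end

section
/- Under the hypotheses of Theorem 2 (finite 𝒫 = 𝒫_c ∪ 𝒫_d with M_p symmetric positive definite with eigenvalues ≥ λ̄ > 0 for p ∈ 𝒫_c and symmetric positive semidefinite for p ∈ 𝒫_d; 0 < γ < 1; k > 1/(4γ(1−γ²)λ̄); piecewise-constant switching signal σ with dwell time τ > 0 such that on every window [jT, (j+1)T) the total time with σ(t) ∈ 𝒫_c is at least T^c with βT^c > α(T − T^c), where β = μ̄/(2(1+γ)), μ̄ = (1−γ²)kλ̄ + γ − √(((1−γ²)kλ̄ − γ)² + 1), α = 2(√(1+γ²) − γ)/(1−γ)), suppose additionally that δ(t) ≡ 0. Then the solution ε of ε̇(t) = (F_{σ(t)} ⊗ I₂)ε(t) satisfies ε(t) → 0 as t → ∞. -/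
open Matrix Kronecker

/-- Pc quadratic bound -/
lemma aux_quad {n : ℕ} {lam : ℝ} {A : Matrix (Fin n) (Fin n) ℝ} (hA : A.IsHermitian)
    (h : ∀ i, lam ≤ hA.eigenvalues i) (x : Fin n → ℝ) :
    lam * (x ⬝ᵥ x) ≤ x ⬝ᵥ A.mulVec x := by
  have hp : (A - algebraMap ℝ (Matrix (Fin n) (Fin n) ℝ) lam).PosSemidef := by
    rw [Matrix.posSemidef_iff_isHermitian_and_spectrum_nonneg]
    refine ⟨?_, ?_⟩
    · apply hA.sub
      simp [IsHermitian, Matrix.algebraMap_eq_diagonal]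
    · intro z hz
      rw [← spectrum.sub_singleton_eq, hA.spectrum_real_eq_range_eigenvalues] at hz
      simp at hz
      obtain ⟨y, hy⟩ := hz
      have := h y
      simp; linarith
  have := hp.dotProduct_mulVec_nonneg x
  simp [Matrix.sub_mulVec, dotProduct_sub, Algebra.algebraMap_eq_smul_one, Matrix.smul_mulVec] at this
  linarith

lemma aux_eig_s12 {p q : ℝ} (a g : ℝ) (hm : ∃ d, 0 ≤ d ∧ p - (a + g) = d ∧ d^2 = (a-g)^2 + q^2) (x v : ℝ) : 
   2 * a * x^2 + 2 * q * x * v + 2 * g * v^2 ≤ p * (x^2+v^2) := by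
  obtain ⟨d, hd, h1, h2⟩ := hm
  obtain rfl : p = d + a + g := by linarith
  clear h1
  rcases hd.eq_or_lt with rfl | hd
  · have : q = 0 := by nlinarith [sq_nonneg (a-g), sq_nonneg q]
    have : a = g := by nlinarith [sq_nonneg (a-g), sq_nonneg q]
    subst_vars; nlinarith
  · have : (a-g)^2 ≤ d^2 := by nlinarith [sq_nonneg q]
    have h3 := abs_le_of_sq_le_sq' this hd.le
    have : 0 ≤ d * ((d - (a - g)) * x^2 - 2*q*x*v + (d + (a-g)) * v^2) := by
      have : 2 * (d * ((d - (a - g)) * x^2 - 2*q*x*v + (d + (a-g)) * v^2)) =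
        ((d-(a-g))*x - q*v)^2 + (q*x-(d+(a-g))*v)^2 := by
          linear_combination (x^2 + v^2) * h2
      nlinarith [sq_nonneg ((d-(a-g))*x - q*v), sq_nonneg (q*x-(d+(a-g))*v)]
    have := nonneg_of_mul_nonneg_right this hd
    nlinarith

lemma aux_mulVec {n : ℕ} (A : Matrix (Fin n) (Fin n) ℝ) (k γ : ℝ) (e : ((Fin n ⊕ Fin n) × Fin 2) → ℝ) :
   (∀ i a, (((Matrix.fromBlocks (-(k • A)) (1 : Matrix (Fin n) (Fin n) ℝ)
              (-((γ * k) • A)) 0) ⊗ₖ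
            (1 : Matrix (Fin 2) (Fin 2) ℝ)).mulVec e) (Sum.inl i, a) = -k * (A.mulVec (fun j => e (Sum.inl j, a)) i) + e (Sum.inr i, a)) ∧
   (∀ i a, (((Matrix.fromBlocks (-(k • A)) (1 : Matrix (Fin n) (Fin n) ℝ)
              (-((γ * k) • A)) 0) ⊗ₖ
            (1 : Matrix (Fin 2) (Fin 2) ℝ)).mulVec e) (Sum.inr i, a) = -(γ * k) * (A.mulVec (fun j => e (Sum.inl j, a)) i)) := by
  constructor <;> intro i a <;>
  simp [Matrix.mulVec, dotProduct, Fintype.sum_prod_type, Matrix.one_apply, Finset.mul_sum, mul_assoc, Finset.sum_neg_distrib]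

/-- The Lyapunov function. -/
noncomputable def auxV {n : ℕ} (γ : ℝ) (e : ((Fin n ⊕ Fin n) × Fin 2) → ℝ) : ℝ :=
  ∑ a : Fin 2, ∑ i : Fin n, (e (Sum.inl i, a) ^ 2 - 2 * γ * (e (Sum.inl i, a) * e (Sum.inr i, a))
    + e (Sum.inr i, a) ^ 2)

/-- Its derivative along the flow. -/
noncomputable def auxD {n : ℕ} (γ k : ℝ) (A : Matrix (Fin n) (Fin n) ℝ)
    (e : ((Fin n ⊕ Fin n) × Fin 2) → ℝ) : ℝ :=
  ∑ a : Fin 2, (-(2 * k * (1 - γ ^ 2)) *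
      ((fun j => e (Sum.inl j, a)) ⬝ᵥ A.mulVec (fun j => e (Sum.inl j, a))) +
    ∑ i : Fin n, (2 * e (Sum.inl i, a) * e (Sum.inr i, a) - 2 * γ * e (Sum.inr i, a) ^ 2))

lemma aux_deriv {n : ℕ} (γ k : ℝ) (A : Matrix (Fin n) (Fin n) ℝ)
    (ε : ℝ → ((Fin n ⊕ Fin n) × Fin 2) → ℝ) (s : ℝ)
    (h : HasDerivAt ε
        (((Matrix.fromBlocks (-(k • A)) (1 : Matrix (Fin n) (Fin n) ℝ)
              (-((γ * k) • A)) 0) ⊗ₖ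
            (1 : Matrix (Fin 2) (Fin 2) ℝ)).mulVec (ε s)) s) :
    HasDerivAt (fun t => auxV γ (ε t)) (auxD γ k A (ε s)) s := by
  have h' := hasDerivAt_pi.1 h
  obtain ⟨h1, h2⟩ := aux_mulVec A k γ (ε s)
  unfold auxV auxD
  apply HasDerivAt.fun_sum
  intro a _
  rw [dotProduct, Finset.mul_sum, ← Finset.sum_add_distrib]
  apply HasDerivAt.fun_sum
  intro i _
  have hx := h' (Sum.inl i, a)
  have hv := h' (Sum.inr i, a)
  rw [h1] at hx
  rw [h2] at hv
  refine (((hx.fun_pow 2).fun_sub ((hx.fun_mul hv).const_mul (2 * γ))).fun_add (hv.fun_pow 2)).congr_deriv ?_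
  simp only [Nat.cast_ofNat]
  ring

lemma auxD_c {n : ℕ} {γ k lam μ β : ℝ} (hγ0 : 0 < γ) (hγ1 : γ < 1) (hk : 0 < k) (hβ0 : 0 < β)
    (hμ : μ = (1 - γ ^ 2) * k * lam + γ -
      Real.sqrt (((1 - γ ^ 2) * k * lam - γ) ^ 2 + 1))
    (hβ : β = μ / (2 * (1 + γ)))
    {A : Matrix (Fin n) (Fin n) ℝ} (hA : A.IsHermitian)
    (h : ∀ i, lam ≤ hA.eigenvalues i) (e : ((Fin n ⊕ Fin n) × Fin 2) → ℝ) :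
    auxD γ k A e ≤ -(2 * β) * auxV γ e := by
  unfold auxD auxV
  rw [Finset.mul_sum]
  apply Finset.sum_le_sum
  intro a _
  have hq := aux_quad hA h (fun j => e (Sum.inl j, a))
  have hc : 0 ≤ 2 * k * (1 - γ ^ 2) := by
    have : 0 ≤ 1 - γ ^ 2 := by nlinarith
    positivity
  have hq2 := mul_le_mul_of_nonneg_left hq hc
  have hs : -(2 * k * (1 - γ ^ 2)) * (lam * ((fun j => e (Sum.inl j, a)) ⬝ᵥ (fun j => e (Sum.inl j, a)))) +
    ∑ i : Fin n, (2 * e (Sum.inl i, a) * e (Sum.inr i, a) - 2 * γ * e (Sum.inr i, a) ^ 2) ≤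
    -(2 * β) * ∑ i : Fin n, (e (Sum.inl i, a) ^ 2 - 2 * γ * (e (Sum.inl i, a) * e (Sum.inr i, a))
    + e (Sum.inr i, a) ^ 2) := by
    rw [dotProduct, Finset.mul_sum, Finset.mul_sum, Finset.mul_sum, ← Finset.sum_add_distrib]
    apply Finset.sum_le_sum
    intro i _
    generalize e (Sum.inl i, a) = x
    generalize e (Sum.inr i, a) = v
    have h1 := aux_eig_s12 (p := -μ) (q := 1) (-((1 - γ ^ 2) * k * lam)) (-γ)
      ⟨_, Real.sqrt_nonneg _, by rw [hμ]; ring, by rw [Real.sq_sqrt (by positivity)]; ring⟩ x v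
    have hm : μ = β * (2 * (1 + γ)) := by rw [hβ]; field_simp
    rw [hm] at h1
    have h2 : 0 ≤ β * (γ * (x + v) ^ 2) := by positivity
    nlinarith
  linarith

lemma auxD_d {n : ℕ} {γ k α : ℝ} (hγ0 : 0 < γ) (hγ1 : γ < 1) (hk : 0 < k)
    (hα : α = 2 * (Real.sqrt (1 + γ ^ 2) - γ) / (1 - γ)) (hα0 : 0 < α)
    {A : Matrix (Fin n) (Fin n) ℝ} (hA : A.PosSemidef)
    (e : ((Fin n ⊕ Fin n) × Fin 2) → ℝ) :
    auxD γ k A e ≤ (2 * α) * auxV γ e := by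
  unfold auxD auxV
  rw [Finset.mul_sum]
  apply Finset.sum_le_sum
  intro a _
  have hq := hA.dotProduct_mulVec_nonneg (fun j => e (Sum.inl j, a))
  rw [star_trivial] at hq
  have hc : 0 ≤ 2 * k * (1 - γ ^ 2) := by
    have : 0 ≤ 1 - γ ^ 2 := by nlinarith
    positivity
  have hq2 := mul_nonneg hc hq
  have hs : 
    ∑ i : Fin n, (2 * e (Sum.inl i, a) * e (Sum.inr i, a) - 2 * γ * e (Sum.inr i, a) ^ 2) ≤
    (2 * α) * ∑ i : Fin n, (e (Sum.inl i, a) ^ 2 - 2 * γ * (e (Sum.inl i, a) * e (Sum.inr i, a))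
    + e (Sum.inr i, a) ^ 2) := by
    rw [Finset.mul_sum]
    apply Finset.sum_le_sum
    intro i _
    generalize e (Sum.inl i, a) = x
    generalize e (Sum.inr i, a) = v
    have h1 := aux_eig_s12 (p := Real.sqrt (1 + γ ^ 2) - γ) (q := 1) 0 (-γ)
      ⟨_, Real.sqrt_nonneg (1 + γ ^ 2), by ring, by rw [Real.sq_sqrt (by positivity)]; ring⟩ x v
    have h1g : 0 < 1 - γ := by linarith
    have hm : Real.sqrt (1 + γ ^ 2) - γ = α * (1 - γ) / 2 := by rw [hα]; field_simp
    rw [hm] at h1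
    have h2 : 0 ≤ α * (γ * (x - v) ^ 2) := by positivity
    have h3 : 0 ≤ α * ((1 - γ) * (x ^ 2 + v ^ 2)) := by positivity
    nlinarith
  linarith

lemma auxV_coord {n : ℕ} {γ : ℝ} (hγ0 : 0 < γ) (hγ1 : γ < 1)
    (e : ((Fin n ⊕ Fin n) × Fin 2) → ℝ) (c : (Fin n ⊕ Fin n) × Fin 2) :
    (1 - γ) * e c ^ 2 ≤ auxV γ e := by
  have key : ∀ x v : ℝ, (1 - γ) * (x ^ 2 + v ^ 2) ≤ x ^ 2 - 2 * γ * (x * v) + v ^ 2 := by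
    intro x v
    have h2 : 0 ≤ γ * (x - v) ^ 2 := by positivity
    nlinarith
  have h1g : 0 < 1 - γ := by linarith
  have nn : ∀ x v : ℝ, 0 ≤ x ^ 2 - 2 * γ * (x * v) + v ^ 2 := fun x v =>
    le_trans (by positivity) (key x v)
  have main : ∀ i a, e (Sum.inl i, a) ^ 2 - 2 * γ * (e (Sum.inl i, a) * e (Sum.inr i, a))
    + e (Sum.inr i, a) ^ 2 ≤ auxV γ e := by
    intro i a
    unfold auxV
    refine le_trans ?_ (Finset.single_le_sum (f := fun a => ∑ i : Fin n, (e (Sum.inl i, a) ^ 2 - 2 * γ * (e (Sum.inl i, a) * e (Sum.inr i, a))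
    + e (Sum.inr i, a) ^ 2)) (fun a _ => Finset.sum_nonneg fun i _ => nn _ _) (Finset.mem_univ a))
    exact Finset.single_le_sum (f := fun i => (e (Sum.inl i, a) ^ 2 - 2 * γ * (e (Sum.inl i, a) * e (Sum.inr i, a))
    + e (Sum.inr i, a) ^ 2)) (fun i _ => nn _ _) (Finset.mem_univ i)
  obtain ⟨i | i, a⟩ := c
  · refine le_trans ?_ (main i a)
    refine le_trans ?_ (key _ _)
    nlinarith [sq_nonneg (e (Sum.inr i, a))]
  · refine le_trans ?_ (main i a)
    refine le_trans ?_ (key _ _)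
    nlinarith [sq_nonneg (e (Sum.inl i, a))]

lemma aux_switch {ι : Type} (Pc : Set ι) (α β T Tc : ℝ) (hα : 0 < α) (hβ : 0 < β) (hT : 0 < T)
    (hwin : α * (T - Tc) < β * Tc) (σ : ℝ → ι) (ts : ℕ → ℝ)
    (hts0 : ts 0 = 0) (htsm : StrictMono ts)
    (htstop : Filter.Tendsto ts Filter.atTop Filter.atTop)
    (hconst : ∀ i, ∀ s ∈ Set.Ico (ts i) (ts (i + 1)), σ s = σ (ts i))
    (hwinc : ∀ j : ℕ, ENNReal.ofReal Tc ≤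
      MeasureTheory.volume
        {s : ℝ | s ∈ Set.Ico ((j : ℝ) * T) (((j : ℝ) + 1) * T) ∧ σ s ∈ Pc})
    (V D : ℝ → ℝ) (hV : Continuous V) (hV0 : ∀ t, 0 ≤ V t)
    (hD : ∀ s, 0 ≤ s → (∀ i, s ≠ ts i) → HasDerivAt V (D s) s)
    (hc : ∀ s, σ s ∈ Pc → D s ≤ -(2 * β) * V s)
    (hd : ∀ s, σ s ∉ Pc → D s ≤ (2 * α) * V s) :
    Filter.Tendsto V Filter.atTop (nhds 0) := by
  classical
  -- every nonneg time lies in an interval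
  have hloc : ∀ s, 0 ≤ s → ∃ i, s ∈ Set.Ico (ts i) (ts (i + 1)) := by
    intro s hs
    obtain ⟨N, hN⟩ := (htstop.eventually_gt_atTop s).exists
    have hex : ∃ N, s < ts N := ⟨N, hN⟩
    have h1 := Nat.find_spec hex
    have hne : Nat.find hex ≠ 0 := by
      intro h0
      rw [h0, hts0] at h1
      linarith
    obtain ⟨i, hi⟩ := Nat.exists_eq_succ_of_ne_zero hne
    refine ⟨i, ?_, ?_⟩
    · exact not_lt.1 (Nat.find_min hex (m := i) (by omega))
    · rw [hi] at h1; exact h1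
  have hts_nonneg : ∀ i, 0 ≤ ts i := fun i => hts0 ▸ htsm.monotone (Nat.zero_le i)
  set C : Set ℝ := {s | 0 ≤ s ∧ σ s ∈ Pc} with hC
  have hCm : MeasurableSet C := by
    have : C = ⋃ i : {i : ℕ // σ (ts i) ∈ Pc}, Set.Ico (ts i) (ts (i + 1)) := by
      ext s
      simp only [hC, Set.mem_ofPred_eq, Set.mem_iUnion]
      constructor
      · rintro ⟨h0, h1⟩
        obtain ⟨i, hi⟩ := hloc s h0
        exact ⟨⟨i, by rw [← hconst i s hi]; exact h1⟩, hi⟩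
      · rintro ⟨⟨i, hi⟩, hs⟩
        exact ⟨(hts_nonneg i).trans hs.1, by rw [hconst i s hs]; exact hi⟩
    rw [this]
    exact MeasurableSet.iUnion fun i => measurableSet_Ico
  set g : ℝ → ℝ := C.indicator (fun _ => (1 : ℝ)) with hg
  have hgm : Measurable g := measurable_const.indicator hCm
  have hg01 : ∀ s, 0 ≤ g s ∧ g s ≤ 1 := by
    intro s
    simp only [hg, Set.indicator_apply]
    split_ifs <;> norm_num
  have hgi : ∀ a b, IntervalIntegrable g MeasureTheory.volume a b := by
    intro a b
    refine (intervalIntegrable_const (c := (1 : ℝ))).mono_fun hgm.aestronglyMeasurable ?_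
    filter_upwards with s
    rw [Real.norm_of_nonneg (hg01 s).1]
    simpa using (hg01 s).2
  set R : ℝ → ℝ := fun t => 2 * α * t - 2 * (α + β) * ∫ s in (0:ℝ)..t, g s with hR
  have hRc : Continuous R := by
    have := intervalIntegral.continuous_primitive hgi 0
    fun_prop
  have hRd : ∀ i, ∀ s ∈ Set.Ioo (ts i) (ts (i + 1)), HasDerivAt R (2 * α - 2 * (α + β) * g s) s := by
    intro i s hs
    have hev : g =ᶠ[nhds s] fun _ => g s := by
      filter_upwards [isOpen_Ioo.mem_nhds hs] with u hu
      have h0 : 0 ≤ u := (hts_nonneg i).trans hu.1.le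
      have h0' : 0 ≤ s := (hts_nonneg i).trans hs.1.le
      have e : σ u = σ s := (hconst i u ⟨hu.1.le, hu.2⟩).trans (hconst i s ⟨hs.1.le, hs.2⟩).symm
      simp only [hg, Set.indicator_apply, hC, Set.mem_ofPred_eq, h0, h0', e]
    have h1 : HasDerivAt (fun u => ∫ x in (0:ℝ)..u, g x) (g s) s :=
      intervalIntegral.integral_hasDerivAt_right (hgi 0 s)
        (hgm.stronglyMeasurable.stronglyMeasurableAtFilter)
        ((continuousAt_const (y := g s)).congr hev.symm)
    have := ((hasDerivAt_id s).const_mul (2 * α)).fun_sub (h1.const_mul (2 * (α + β)))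
    exact this.congr_deriv (by ring)
  set W : ℝ → ℝ := fun t => V t * Real.exp (-R t) with hW
  have hWc : Continuous W := by fun_prop
  have hWa : ∀ i, AntitoneOn W (Set.Icc (ts i) (ts (i + 1))) := by
    intro i
    refine antitoneOn_of_hasDerivWithinAt_nonpos (convex_Icc _ _) hWc.continuousOn
      (f' := fun s => D s * Real.exp (-R s) + V s * (Real.exp (-R s) * -(2 * α - 2 * (α + β) * g s))) ?_ ?_
    · intro s hs
      rw [interior_Icc] at hs
      have hne : ∀ j, s ≠ ts j := by
        rintro j rfl
        have h1 := htsm.lt_iff_lt.1 hs.1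
        have h2 := htsm.lt_iff_lt.1 hs.2
        omega
      have hv := hD s ((hts_nonneg i).trans hs.1.le) hne
      exact (hv.mul (hRd i s hs).neg.exp).hasDerivWithinAt
    · intro s hs
      rw [interior_Icc] at hs
      have h0 : 0 ≤ s := (hts_nonneg i).trans hs.1.le
      have he := Real.exp_pos (-R s)
      have : D s ≤ (2 * α - 2 * (α + β) * g s) * V s := by
        by_cases h : σ s ∈ Pc
        · have : g s = 1 := by simp [hg, hC, h0, h]
          rw [this]
          have := hc s h
          linarith
        · have : g s = 0 := by simp [hg, hC, h]
          rw [this]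
          have := hd s h
          linarith
      have := mul_le_mul_of_nonneg_right this he.le
      show D s * Real.exp (-R s) + V s * (Real.exp (-R s) * -(2 * α - 2 * (α + β) * g s)) ≤ 0
      linarith
  have hWN : ∀ N, AntitoneOn W (Set.Icc 0 (ts N)) := by
    intro N
    induction N with
    | zero => rw [hts0, Set.Icc_self]; exact Set.subsingleton_singleton.antitoneOn W
    | succ N ih =>
      have h1 := hts_nonneg N
      have h2 := (htsm (Nat.lt_succ_self N)).le
      have := ih.union_right (hWa N) (isGreatest_Icc h1) (isLeast_Icc h2)
      rwa [Set.Icc_union_Icc_eq_Icc h1 h2] at this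
  have hR0 : R 0 = 0 := by simp [hR]
  have hVle : ∀ t, 0 ≤ t → V t ≤ V 0 * Real.exp (R t) := by
    intro t ht
    obtain ⟨N, hN⟩ := (htstop.eventually_gt_atTop t).exists
    have := hWN N ⟨le_rfl, hts_nonneg N⟩ ⟨ht, hN.le⟩ ht
    simp only [hW, hR0, neg_zero, Real.exp_zero, mul_one] at this
    have h2 := mul_le_mul_of_nonneg_right this (Real.exp_pos (R t)).le
    rwa [mul_assoc, ← Real.exp_add, neg_add_cancel, Real.exp_zero, mul_one] at h2
  have hdiff : ∀ a b, R b - R a = 2 * α * (b - a) - 2 * (α + β) * ∫ s in a..b, g s := by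
    intro a b
    rw [← intervalIntegral.integral_interval_sub_left (hgi 0 b) (hgi 0 a)]
    simp only [hR]; ring
  set c := β * Tc - α * (T - Tc) with hcdef
  have hcpos : 0 < c := by simp only [hcdef]; linarith
  have hstep : ∀ j : ℕ, R ((j + 1) * T) - R (j * T) ≤ - (2 * c) := by
    intro j
    have hle : (j:ℝ) * T ≤ (j + 1) * T := by nlinarith
    have hint : Tc ≤ ∫ s in ((j:ℝ) * T)..((j + 1) * T), g s := by
      rw [intervalIntegral.integral_of_le hle, ← MeasureTheory.integral_Ico_eq_integral_Ioc, hg,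
        MeasureTheory.setIntegral_indicator hCm, MeasureTheory.setIntegral_const, smul_eq_mul, mul_one]
      have hset : {s : ℝ | s ∈ Set.Ico ((j : ℝ) * T) (((j : ℝ) + 1) * T) ∧ σ s ∈ Pc} =
          Set.Ico ((j : ℝ) * T) (((j : ℝ) + 1) * T) ∩ C := by
        ext s
        simp only [hC, Set.mem_ofPred_eq, Set.mem_inter_iff]
        constructor
        · rintro ⟨h1, h2⟩
          exact ⟨h1, le_trans (by positivity) h1.1, h2⟩
        · rintro ⟨h1, _, h2⟩
          exact ⟨h1, h2⟩
      have := hwinc j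
      rw [hset] at this
      rw [MeasureTheory.measureReal_def]
      refine (ENNReal.ofReal_le_iff_le_toReal ?_).1 this
      exact (lt_of_le_of_lt (MeasureTheory.measure_mono Set.inter_subset_left) measure_Ico_lt_top).ne
    rw [hdiff]
    have := mul_le_mul_of_nonneg_left hint (by positivity : 0 ≤ 2 * (α + β))
    simp only [hcdef]
    linarith
  have hRj : ∀ j : ℕ, R (j * T) ≤ -(2 * c) * j := by
    intro j
    induction j with
    | zero => simp [hR0]
    | succ j ih =>
      have := hstep j
      push_cast
      linarith
  have hRle : ∀ t, 0 ≤ t → R t ≤ -(2 * c / T) * t + (2 * c + 2 * α * T) := by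
    intro t ht
    have h1 := Nat.floor_le (div_nonneg ht hT.le)
    have h2 := Nat.lt_floor_add_one (t / T)
    set j := ⌊t / T⌋₊
    rw [le_div_iff₀ hT] at h1
    have h2' := h2
    rw [div_lt_iff₀ hT] at h2
    have h3 := hdiff (j * T) t
    have h4 : 0 ≤ ∫ s in (j * T)..t, g s := intervalIntegral.integral_nonneg h1 fun s _ => (hg01 s).1
    have h5 := mul_nonneg (by positivity : 0 ≤ 2 * (α + β)) h4
    have h6 : 2 * α * (t - j * T) ≤ 2 * α * T := by
      apply mul_le_mul_of_nonneg_left _ (by positivity)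
      linarith
    have h7 := hRj j
    have h8 : 2 * c * (t / T) ≤ 2 * c * (j + 1) := mul_le_mul_of_nonneg_left h2'.le (by positivity)
    have h9 : -(2 * c / T) * t = - (2 * c * (t / T)) := by ring
    rw [h9]
    linarith
  have hlim : Filter.Tendsto (fun t => V 0 * Real.exp (-(2 * c / T) * t + (2 * c + 2 * α * T)))
      Filter.atTop (nhds 0) := by
    have h1 : Filter.Tendsto (fun t : ℝ => -(2 * c / T) * t + (2 * c + 2 * α * T)) Filter.atTop Filter.atBot := by
      apply Filter.tendsto_atBot_add_const_right
      exact Filter.tendsto_id.const_mul_atTop_of_neg (by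
        have : 0 < 2 * c / T := by positivity
        linarith)
    simpa using (Real.tendsto_exp_atBot.comp h1).const_mul (V 0)
  refine squeeze_zero' (Filter.Eventually.of_forall hV0) ?_ hlim
  filter_upwards [Filter.eventually_ge_atTop 0] with t ht
  refine (hVle t ht).trans (mul_le_mul_of_nonneg_left ?_ (hV0 0))
  exact Real.exp_le_exp.2 (hRle t ht)


/-- second conclusion of Theorem 2 of the paper. Under the hypotheses of
Theorem 2 (switched error system with dwell time `τ`, per-window connected time at least
`T^c` with `βT^c > α(T - T^c)`, where `β = μ̄/(2(1+γ))`,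
`μ̄ = (1-γ²)kλ̄ + γ - √(((1-γ²)kλ̄-γ)²+1)`, `α = 2(√(1+γ²)-γ)/(1-γ)`), if moreover
`δ(t) ≡ 0`, then the solution `ε` of `ε̇ = (F_{σ(t)} ⊗ I₂)ε` satisfies `ε(t) → 0`
as `t → ∞`. -/
theorem tracking_error_convergence_jointly_connected {n : ℕ} (hn : 1 ≤ n)
    {ι : Type} [Fintype ι] (Pc Pd : Set ι) (hPcd : Pc ∪ Pd = Set.univ)
    (lam γ k T Tc τ : ℝ)
    (hlam : 0 < lam) (hγ0 : 0 < γ) (hγ1 : γ < 1)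
    (hk : 1 / (4 * γ * (1 - γ ^ 2) * lam) < k)
    (hT : 0 < T) (hTc0 : 0 < Tc) (hTcT : Tc ≤ T) (hτ : 0 < τ)
    (μ β α : ℝ)
    (hμ : μ = (1 - γ ^ 2) * k * lam + γ -
      Real.sqrt (((1 - γ ^ 2) * k * lam - γ) ^ 2 + 1))
    (hβ : β = μ / (2 * (1 + γ)))
    (hα : α = 2 * (Real.sqrt (1 + γ ^ 2) - γ) / (1 - γ))
    (hwin : α * (T - Tc) < β * Tc)
    (M : ι → Matrix (Fin n) (Fin n) ℝ)
    (hMc : ∀ p ∈ Pc, (M p).PosDef)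
    (heig : ∀ (p : ι) (hp : p ∈ Pc) (i : Fin n), lam ≤ (hMc p hp).1.eigenvalues i)
    (hMd : ∀ p ∈ Pd, (M p).PosSemidef)
    (σ : ℝ → ι) (ts : ℕ → ℝ)
    (hts0 : ts 0 = 0) (htsm : StrictMono ts)
    (htsτ : ∀ i, τ ≤ ts (i + 1) - ts i)
    (htstop : Filter.Tendsto ts Filter.atTop Filter.atTop)
    (hconst : ∀ i, ∀ s ∈ Set.Ico (ts i) (ts (i + 1)), σ s = σ (ts i))
    (hwinc : ∀ j : ℕ, ENNReal.ofReal Tc ≤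
      MeasureTheory.volume
        {s : ℝ | s ∈ Set.Ico ((j : ℝ) * T) (((j : ℝ) + 1) * T) ∧ σ s ∈ Pc})
    (hwind : ∀ j : ℕ,
      MeasureTheory.volume
        {s : ℝ | s ∈ Set.Ico ((j : ℝ) * T) (((j : ℝ) + 1) * T) ∧ σ s ∈ Pd} ≤
          ENNReal.ofReal (T - Tc))
    (ε : ℝ → ((Fin n ⊕ Fin n) × Fin 2) → ℝ) (hcont : Continuous ε)
    (hODE : ∀ s, 0 ≤ s → (∀ i, s ≠ ts i) →
      HasDerivAt ε
        (((Matrix.fromBlocks (-(k • M (σ s))) (1 : Matrix (Fin n) (Fin n) ℝ)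
              (-((γ * k) • M (σ s))) 0) ⊗ₖ
            (1 : Matrix (Fin 2) (Fin 2) ℝ)).mulVec (ε s)) s) :
    Filter.Tendsto ε Filter.atTop (nhds 0) := by
  have h1g : 0 < 1 - γ := by linarith
  have h1g2 : 0 < 1 - γ ^ 2 := by nlinarith
  have hk0 : 0 < k := lt_trans (by positivity) hk
  have hα0 : 0 < α := by
    have : γ < Real.sqrt (1 + γ ^ 2) := Real.lt_sqrt_of_sq_lt (by linarith)
    have : 0 < Real.sqrt (1 + γ ^ 2) - γ := by linarith
    rw [hα]; positivity
  have hβ0 : 0 < β := by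
    have : 0 ≤ α * (T - Tc) := mul_nonneg hα0.le (by linarith)
    exact pos_of_mul_pos_left (lt_of_le_of_lt this hwin) hTc0.le
  have hVlim : Filter.Tendsto (fun t => auxV γ (ε t)) Filter.atTop (nhds 0) := by
    refine aux_switch Pc α β T Tc hα0 hβ0 hT hwin σ ts hts0 htsm htstop hconst hwinc
      (fun t => auxV γ (ε t)) (fun s => auxD γ k (M (σ s)) (ε s)) ?_ ?_ ?_ ?_ ?_
    · unfold auxV
      fun_prop
    · intro t
      exact le_trans (by positivity) (auxV_coord hγ0 hγ1 (ε t) (Sum.inl ⟨0, hn⟩, 0))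
    · intro s hs hne
      exact aux_deriv γ k _ ε s (hODE s hs hne)
    · intro s hs
      exact auxD_c hγ0 hγ1 hk0 hβ0 hμ hβ (hMc _ hs).1 (heig _ hs) (ε s)
    · intro s hs
      have hpd : σ s ∈ Pd := by
        have : σ s ∈ Pc ∪ Pd := by rw [hPcd]; trivial
        exact this.resolve_left hs
      exact auxD_d hγ0 hγ1 hk0 hα hα0 (hMd _ hpd) (ε s)
  rw [tendsto_pi_nhds]
  intro c
  have hsq : Filter.Tendsto (fun t => ε t c ^ 2) Filter.atTop (nhds 0) := by
    have h0 : Filter.Tendsto (fun t => auxV γ (ε t) / (1 - γ)) Filter.atTop (nhds 0) := by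
      simpa using hVlim.div_const (1 - γ)
    refine squeeze_zero (fun t => sq_nonneg _) (fun t => ?_) h0
    rw [le_div_iff₀ h1g]
    linarith [auxV_coord hγ0 hγ1 (ε t) c]
  have habs := hsq.sqrt
  simp only [Real.sqrt_sq_eq_abs, Real.sqrt_zero] at habs
  exact (tendsto_zero_iff_abs_tendsto_zero _).2 habs
end
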